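/- Let n ≥ 2, Ω ⊂ R^n a bounded open set with smooth boundary, p ≥ 2, h : (0,B) → (0,∞) continuous with primitive H(λ)=∫₀^λ h(s)ds and T_h = H/h. If u ∈ C²(Ω̄), 0 < u < B on Ω̄, and ∫_{∂Ω} |∇u|^{p−2}(∇u · n) H(u) dσ ≤ 0, then ∫_Ω |∇u|^p h(u) dx ≤ (p−1+√(n−1))^{p/2} ∫_Ω (|∇²u| |T_h(u)|)^{p/2} h(u) dx, where |∇²u| is the Frobenius norm of the Hessian. -/

import Mathlib

open Set MeasureTheory
open scoped ENNReal RealInnerProductSpace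

/-- The Frobenius (Euclidean) norm of a linear operator on `ℝⁿ`, i.e. of its matrix. -/
noncomputable def frobNorm {n : ℕ} (T : EuclideanSpace ℝ (Fin n) →L[ℝ] EuclideanSpace ℝ (Fin n)) : ℝ :=
  Real.sqrt (∑ i, ∑ j, (T (EuclideanSpace.single j 1) i) ^ 2)


open Filter Topology
open scoped NNReal

lemma setLIntegral_comp_homeomorph_le {X : Type*} [MetricSpace X] [MeasurableSpace X]
    [BorelSpace X] (Θ : X ≃ₜ X) {S : Set X} {k : ℝ≥0}
    (hΘ : LipschitzOnWith k Θ.symm (Θ '' S)) {d : ℝ} (hd : 0 ≤ d) (g : X → ℝ≥0∞) :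
    ∫⁻ x in S, g (Θ x) ∂μH[d] ≤ (k : ℝ≥0∞) ^ d * ∫⁻ y in Θ '' S, g y ∂μH[d] := by
  have hle : (μH[d].restrict S).map Θ ≤ (k : ℝ≥0∞) ^ d • (μH[d] : Measure X).restrict (Θ '' S) := by
    refine Measure.le_iff.2 fun A hA => ?_
    rw [Measure.map_apply Θ.continuous.measurable hA,
      Measure.restrict_apply (Θ.continuous.measurable hA), Measure.smul_apply,
      Measure.restrict_apply hA]
    have : Θ ⁻¹' A ∩ S = Θ.symm '' (A ∩ Θ '' S) := by
      ext x
      simp only [mem_inter_iff, mem_preimage, mem_image]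
      constructor
      · rintro ⟨h1, h2⟩
        exact ⟨Θ x, ⟨h1, x, h2, rfl⟩, by simp⟩
      · rintro ⟨y, ⟨h1, z, h2, rfl⟩, rfl⟩
        simpa using ⟨h1, h2⟩
    rw [this, smul_eq_mul]
    exact (hΘ.mono inter_subset_right).hausdorffMeasure_image_le hd
  calc ∫⁻ x in S, g (Θ x) ∂μH[d] = ∫⁻ y, g y ∂((μH[d].restrict S).map Θ) := by
        rw [← Homeomorph.toMeasurableEquiv_coe Θ, lintegral_map_equiv]
    _ ≤ ∫⁻ y, g y ∂((k : ℝ≥0∞) ^ d • (μH[d] : Measure X).restrict (Θ '' S)) :=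
        lintegral_mono' hle le_rfl
    _ = _ := by rw [lintegral_smul_measure, smul_eq_mul]

lemma setLIntegral_image_homeomorph_le {X : Type*} [MetricSpace X] [MeasurableSpace X]
    [BorelSpace X] (Θ : X ≃ₜ X) {S : Set X} {k : ℝ≥0}
    (hΘ : LipschitzOnWith k Θ S) {d : ℝ} (hd : 0 ≤ d) (g : X → ℝ≥0∞) :
    ∫⁻ y in Θ '' S, g y ∂μH[d] ≤ (k : ℝ≥0∞) ^ d * ∫⁻ x in S, g (Θ x) ∂μH[d] := by
  have himg : Θ.symm '' (Θ '' S) = S := by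
    rw [← image_comp]; simp
  have := setLIntegral_comp_homeomorph_le Θ.symm (S := Θ '' S) (k := k) (by rw [himg]; exact hΘ) hd
    (fun x => g (Θ x))
  rw [himg] at this
  simpa using this

lemma exists_volume_eq_smul_hausdorffMeasure (m : ℕ) :
    ∃ c : ℝ≥0∞, c ≠ 0 ∧ c ≠ ⊤ ∧
      (volume : Measure (EuclideanSpace ℝ (Fin m))) = c • μH[(m : ℝ)] := by
  have : Measure.IsAddHaarMeasure (μH[(m : ℝ)] : Measure (EuclideanSpace ℝ (Fin m))) := by
    have := isAddHaarMeasure_hausdorffMeasure (E := EuclideanSpace ℝ (Fin m))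
    simpa using this
  refine ⟨(Measure.addHaarScalarFactor (volume : Measure (EuclideanSpace ℝ (Fin m)))
    (μH[(m : ℝ)]) : ℝ≥0∞), ?_, by simp, ?_⟩
  · simpa using (Measure.addHaarScalarFactor_pos_of_isAddHaarMeasure
      (volume : Measure (EuclideanSpace ℝ (Fin m))) (μH[(m : ℝ)])).ne'
  · exact Measure.isAddLeftInvariant_eq_smul _ _

/-- The embedding of `ℝᵐ` as the hyperplane `{x | x 0 = 0}` of `ℝᵐ⁺¹`, translated by `z`. -/
noncomputable def consE {m : ℕ} (z : ℝ) (y : EuclideanSpace ℝ (Fin m)) :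
    EuclideanSpace ℝ (Fin (m + 1)) :=
  WithLp.toLp 2 (Fin.cons z y.ofLp)

lemma continuous_consE {m : ℕ} :
    Continuous fun q : ℝ × EuclideanSpace ℝ (Fin m) => consE q.1 q.2 := by
  refine (PiLp.continuous_toLp 2 _).comp ?_
  refine continuous_pi fun i => ?_
  refine Fin.cases ?_ (fun j => ?_) i
  · simpa using continuous_fst
  · simp only [Fin.cons_succ]
    fun_prop

@[simp] lemma consE_zero {m : ℕ} (z : ℝ) (y : EuclideanSpace ℝ (Fin m)) : consE z y 0 = z := rfl

lemma measurePreserving_consE (m : ℕ) :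
    MeasurePreserving (fun q : ℝ × EuclideanSpace ℝ (Fin m) => consE q.1 q.2) := by
  have h1 : MeasurePreserving (fun q : ℝ × EuclideanSpace ℝ (Fin m) => (q.1, q.2.ofLp)) :=
    (MeasurePreserving.id (volume : Measure ℝ)).prod (PiLp.volume_preserving_ofLp (Fin m))
  have h2 := (volume_preserving_piFinSuccAbove (fun _ : Fin (m + 1) => ℝ) 0).symm
  have h3 := (PiLp.volume_preserving_toLp (Fin (m + 1))).comp (h2.comp h1)
  convert! h3 using 1
  ext q i
  simp [consE, MeasurableEquiv.piFinSuccAbove]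

lemma isometry_consE_zero (m : ℕ) : Isometry (consE (m := m) 0) := by
  refine Isometry.of_dist_eq fun x y => ?_
  simp [EuclideanSpace.dist_eq, consE, Fin.sum_univ_succ]

lemma range_consE_zero (m : ℕ) :
    range (consE (m := m) 0) = {x | x 0 = 0} := by
  ext x
  constructor
  · rintro ⟨y, rfl⟩; rfl
  · intro hx
    refine ⟨WithLp.toLp 2 (Fin.tail x.ofLp), ?_⟩
    ext i
    refine Fin.cases ?_ (fun j => ?_) i
    · exact (hx : x 0 = 0).symm
    · simp [consE, Fin.tail]

lemma measurableEmbedding_consE_zero (m : ℕ) : MeasurableEmbedding (consE (m := m) 0) :=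
  (isometry_consE_zero m).isClosedEmbedding.measurableEmbedding

lemma lintegral_consE_zero {m : ℕ} (g : EuclideanSpace ℝ (Fin (m + 1)) → ℝ≥0∞) :
    ∫⁻ y : EuclideanSpace ℝ (Fin m), g (consE 0 y) ∂μH[(m : ℝ)] =
      ∫⁻ x in {x | x 0 = 0}, g x ∂μH[(m : ℝ)] := by
  rw [← range_consE_zero, ← (isometry_consE_zero m).map_hausdorffMeasure (Or.inl m.cast_nonneg),
    (measurableEmbedding_consE_zero m).lintegral_map]

lemma lintegral_comp_mul_left {a : ℝ} (ha : 0 < a) (f : ℝ → ℝ≥0∞) :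
    ∫⁻ t, f (a * t) = ENNReal.ofReal a⁻¹ * ∫⁻ z, f z := by
  have he : MeasurableEmbedding (fun t : ℝ => a * t) :=
    (Homeomorph.mulLeft₀ a ha.ne').measurableEmbedding
  rw [← he.lintegral_map, Real.map_volume_mul_left ha.ne', lintegral_smul_measure,
    abs_of_pos (inv_pos.2 ha), smul_eq_mul]

lemma norm_le_norm_consE {m : ℕ} (z : ℝ) (y : EuclideanSpace ℝ (Fin m)) :
    ‖y‖ ≤ ‖consE z y‖ := by
  rw [EuclideanSpace.norm_eq, EuclideanSpace.norm_eq]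
  refine Real.sqrt_le_sqrt ?_
  simp only [consE, Fin.sum_univ_succ, Fin.cons_zero, Fin.cons_succ]
  have := sq_nonneg ‖z‖
  linarith

lemma tendsto_lintegral_layer_hyperplane {m : ℕ} {ψ : ℝ → ℝ≥0} (hψ : Measurable ψ)
    (hψfin : ∫⁻ t, ψ t ≠ ⊤) {g : EuclideanSpace ℝ (Fin (m + 1)) → ℝ≥0} (hg : Continuous g)
    (hgc : HasCompactSupport g) {a : ℝ} (ha : 0 < a) :
    Tendsto (fun s : ℝ => ∫⁻ x : EuclideanSpace ℝ (Fin (m + 1)),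
        ENNReal.ofReal s⁻¹ * ψ (a * x 0 / s) * g x) (𝓝[>] 0)
      (𝓝 (ENNReal.ofReal a⁻¹ *
        ((∫⁻ t, ψ t) * ∫⁻ y : EuclideanSpace ℝ (Fin m), g (consE 0 y)))) := by
  have hcons := continuous_consE (m := m)
  have key : ∀ s : ℝ, 0 < s → ∫⁻ x : EuclideanSpace ℝ (Fin (m + 1)),
      ENNReal.ofReal s⁻¹ * ψ (a * x 0 / s) * g x =
      ENNReal.ofReal a⁻¹ * ∫⁻ q : ℝ × EuclideanSpace ℝ (Fin m),
        ψ q.1 * g (consE (s / a * q.1) q.2) := by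
    intro s hs
    have hx0 : Measurable fun x : EuclideanSpace ℝ (Fin (m + 1)) => x 0 :=
      (by fun_prop : Continuous fun x : EuclideanSpace ℝ (Fin (m + 1)) => x 0).measurable
    have hm : Measurable fun x : EuclideanSpace ℝ (Fin (m + 1)) =>
        ENNReal.ofReal s⁻¹ * ψ (a * x 0 / s) * (g x : ℝ≥0∞) :=
      (measurable_const.mul (hψ.comp ((hx0.const_mul a).div_const s)).coe_nnreal_ennreal).mul
        hg.measurable.coe_nnreal_ennreal
    rw [← (measurePreserving_consE m).lintegral_comp hm]
    have hm1 := hm.comp hcons.measurable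
    have hm2 : Measurable fun q : ℝ × EuclideanSpace ℝ (Fin m) =>
        (ψ q.1 * g (consE (s / a * q.1) q.2) : ℝ≥0∞) := by
      refine (hψ.comp measurable_fst).coe_nnreal_ennreal.mul
        (Continuous.measurable ?_).coe_nnreal_ennreal
      exact hg.comp (hcons.comp
        (Continuous.prodMk (continuous_const.mul continuous_fst) continuous_snd))
    have e1 := lintegral_prod_symm (μ := (volume : Measure ℝ))
      (ν := (volume : Measure (EuclideanSpace ℝ (Fin m)))) _ hm1.aemeasurable
    have e2 := lintegral_prod_symm (μ := (volume : Measure ℝ))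
      (ν := (volume : Measure (EuclideanSpace ℝ (Fin m)))) _ hm2.aemeasurable
    rw [Measure.volume_eq_prod, e2, ← lintegral_const_mul _ hm2.lintegral_prod_left']
    refine e1.trans (lintegral_congr fun y => ?_)
    simp only [Function.comp, consE_zero]
    have hsa : 0 < s / a := div_pos hs ha
    have e3 := lintegral_comp_mul_left hsa (fun z : ℝ =>
      ENNReal.ofReal s⁻¹ * ψ (a * z / s) * (g (consE z y) : ℝ≥0∞))
    have e4 : ∀ t : ℝ, a * (s / a * t) / s = t := fun t => by field_simp
    simp only [e4, mul_assoc] at e3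
    rw [lintegral_const_mul'] at e3
    swap
    · simp
    have h5 : ENNReal.ofReal (s / a) * ENNReal.ofReal (s / a)⁻¹ = 1 := by
      rw [← ENNReal.ofReal_mul hsa.le, mul_inv_cancel₀ hsa.ne', ENNReal.ofReal_one]
    have h6 : ENNReal.ofReal (s / a) * ENNReal.ofReal s⁻¹ = ENNReal.ofReal a⁻¹ := by
      rw [← ENNReal.ofReal_mul hsa.le]; congr 1; field_simp
    have h7 := congrArg (fun w => ENNReal.ofReal (s / a) * w) e3
    simp only [← mul_assoc, h5, h6, one_mul] at h7
    simp only [h7]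
  have hcong : (fun s : ℝ => ENNReal.ofReal a⁻¹ * ∫⁻ q : ℝ × EuclideanSpace ℝ (Fin m),
        (ψ q.1 * g (consE (s / a * q.1) q.2) : ℝ≥0∞)) =ᶠ[𝓝[>] 0] (fun s : ℝ =>
      ∫⁻ x : EuclideanSpace ℝ (Fin (m + 1)), ENNReal.ofReal s⁻¹ * ψ (a * x 0 / s) * g x) := by
    filter_upwards [self_mem_nhdsWithin] with s hs using (key s hs).symm
  refine Tendsto.congr' hcong (ENNReal.Tendsto.const_mul ?_ (Or.inr ENNReal.ofReal_ne_top))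
  have hg0 : Measurable fun y : EuclideanSpace ℝ (Fin m) => (g (consE 0 y) : ℝ≥0∞) :=
    (hg.comp (isometry_consE_zero m).continuous).measurable.coe_nnreal_ennreal
  rw [← lintegral_prod_mul hψ.coe_nnreal_ennreal.aemeasurable hg0.aemeasurable]
  obtain ⟨M, hM⟩ : ∃ M : ℝ≥0, ∀ x, g x ≤ M := by
    obtain ⟨M, hM⟩ := (hgc.isCompact_range hg).bddAbove
    exact ⟨M, fun x => hM (mem_range_self x)⟩
  obtain ⟨R, hR⟩ := hgc.isBounded.subset_closedBall (0 : EuclideanSpace ℝ (Fin (m + 1)))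
  refine tendsto_lintegral_filter_of_dominated_convergence
    (fun q => (ψ q.1 : ℝ≥0∞) * (Metric.closedBall 0 R).indicator (fun _ => (M : ℝ≥0∞)) q.2)
    ?_ ?_ ?_ ?_
  · refine Eventually.of_forall fun s => ?_
    refine (hψ.comp measurable_fst).coe_nnreal_ennreal.mul
        (Continuous.measurable ?_).coe_nnreal_ennreal
    exact hg.comp (hcons.comp
      (Continuous.prodMk (continuous_const.mul continuous_fst) continuous_snd))
  · refine Eventually.of_forall fun s => Eventually.of_forall fun q => ?_
    by_cases hq : q.2 ∈ Metric.closedBall (0 : EuclideanSpace ℝ (Fin m)) R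
    · rw [indicator_of_mem hq]
      gcongr
      exact hM _
    · have : g (consE (s / a * q.1) q.2) = 0 := by
        by_contra hne
        refine hq ?_
        have := hR (subset_tsupport _ (Function.mem_support.2 hne))
        rw [mem_closedBall_zero_iff] at this ⊢
        exact (norm_le_norm_consE _ _).trans this
      simp [this]
  · rw [Measure.volume_eq_prod, lintegral_prod_mul hψ.coe_nnreal_ennreal.aemeasurable
      (measurable_const.indicator measurableSet_closedBall).aemeasurable]
    refine ENNReal.mul_ne_top hψfin ?_
    rw [lintegral_indicator measurableSet_closedBall, setLIntegral_const]
    exact ENNReal.mul_ne_top (by simp) measure_closedBall_lt_top.ne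
  · refine Eventually.of_forall fun q => ?_
    refine ENNReal.Tendsto.const_mul ?_ (Or.inr (by simp))
    refine ENNReal.tendsto_coe.2 ?_
    have hc : Continuous fun s : ℝ => g (consE (s / a * q.1) q.2) :=
      hg.comp (hcons.comp
        (by fun_prop : Continuous fun s : ℝ => (s / a * q.1, q.2)))
    have := hc.tendsto 0
    simp only [zero_div, zero_mul] at this
    exact this.mono_left nhdsWithin_le_nhds

lemma exists_flattening_homeomorph {m : ℕ} {Φ : EuclideanSpace ℝ (Fin (m + 1)) → ℝ}
    (hΦ : ContDiff ℝ 1 Φ) {x₀ : EuclideanSpace ℝ (Fin (m + 1))} (h₀ : gradient Φ x₀ ≠ 0)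
    {k : ℝ≥0} (hk : 1 < k) :
    ∃ S : Set (EuclideanSpace ℝ (Fin (m + 1))), IsOpen S ∧ x₀ ∈ S ∧
      ∃ Θ : EuclideanSpace ℝ (Fin (m + 1)) ≃ₜ EuclideanSpace ℝ (Fin (m + 1)),
        (∀ x ∈ S, Φ x = ‖gradient Φ x₀‖ * Θ x 0) ∧
        LipschitzOnWith k Θ S ∧ LipschitzOnWith k Θ.symm (Θ '' S) ∧
        ∀ x ∈ S, ‖gradient Φ x‖₊ ≤ k * ‖gradient Φ x₀‖₊ ∧
          ‖gradient Φ x₀‖₊ ≤ k * ‖gradient Φ x‖₊ := by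
  set a : ℝ := ‖gradient Φ x₀‖ with ha_def
  have ha : 0 < a := norm_pos_iff.2 h₀
  obtain ⟨b, hb⟩ : ∃ b : OrthonormalBasis (Fin (m + 1)) ℝ (EuclideanSpace ℝ (Fin (m + 1))),
      b 0 = a⁻¹ • gradient Φ x₀ := by
    have hv : Orthonormal ℝ (({0} : Set (Fin (m + 1))).domRestrict
        (fun _ => a⁻¹ • gradient Φ x₀)) := by
      rw [orthonormal_iff_ite]
      rintro ⟨i, hi⟩ ⟨j, hj⟩
      obtain rfl : i = 0 := hi
      obtain rfl : j = 0 := hj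
      simp only [domRestrict_apply, inner_smul_left, inner_smul_right, if_true,
        real_inner_self_eq_norm_sq, ← ha_def]
      simp
      field_simp
    obtain ⟨b, hb⟩ := hv.exists_orthonormalBasis_extension_of_card_eq (by simp)
    exact ⟨b, hb 0 rfl⟩
  set R : EuclideanSpace ℝ (Fin (m + 1)) ≃L[ℝ] EuclideanSpace ℝ (Fin (m + 1)) :=
    b.repr.toContinuousLinearEquiv with hR
  have hRnorm : ∀ x, ‖R x‖ = ‖x‖ := fun x => b.repr.norm_map x
  have hR0 : ∀ x, R x 0 = a⁻¹ * ⟪gradient Φ x₀, x⟫ := by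
    intro x
    have : R x 0 = ⟪b 0, x⟫ := b.repr_apply_apply x 0
    rw [this, hb, real_inner_smul_left]
  set θ : EuclideanSpace ℝ (Fin (m + 1)) → EuclideanSpace ℝ (Fin (m + 1)) :=
    fun x => R x + (a⁻¹ * Φ x - R x 0) • EuclideanSpace.single 0 1 with hθ
  have hθ0 : ∀ x, Φ x = a * θ x 0 := by
    intro x
    simp only [hθ, PiLp.add_apply, PiLp.smul_apply, PiLp.single_apply, if_true,
      smul_eq_mul]
    field_simp
    ring
  have hΦd : HasStrictFDerivAt Φ (innerSL ℝ (gradient Φ x₀)) x₀ := by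
    have h1 := hΦ.contDiffAt.hasStrictFDerivAt (x := x₀) (by norm_num)
    have h2 := (hΦ.differentiable (by norm_num) x₀).hasGradientAt.hasFDerivAt
    rw [h2.fderiv] at h1
    exact h1
  have hθd : HasStrictFDerivAt θ
      (R : EuclideanSpace ℝ (Fin (m + 1)) →L[ℝ] EuclideanSpace ℝ (Fin (m + 1))) x₀ := by
    have hR0d : HasStrictFDerivAt (fun x => R x 0)
        ((EuclideanSpace.proj (0 : Fin (m + 1)) : EuclideanSpace ℝ (Fin (m + 1)) →L[ℝ] ℝ).comp
          (R : EuclideanSpace ℝ (Fin (m + 1)) →L[ℝ] EuclideanSpace ℝ (Fin (m + 1)))) x₀ :=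
      ((EuclideanSpace.proj (0 : Fin (m + 1)) : EuclideanSpace ℝ (Fin (m + 1)) →L[ℝ] ℝ).comp
        (R : EuclideanSpace ℝ (Fin (m + 1)) →L[ℝ] EuclideanSpace ℝ (Fin (m + 1)))).hasStrictFDerivAt
    have h1 := (R : EuclideanSpace ℝ (Fin (m + 1)) →L[ℝ]
        EuclideanSpace ℝ (Fin (m + 1))).hasStrictFDerivAt (x := x₀) |>.add
      (((hΦd.const_mul a⁻¹).sub hR0d).smul_const (EuclideanSpace.single (0 : Fin (m + 1)) (1 : ℝ)))
    refine h1.congr_fderiv ?_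
    ext x : 1
    have hz : a⁻¹ * innerSL ℝ (gradient Φ x₀) x - R x 0 = 0 := by
      rw [hR0, innerSL_apply_apply]; ring
    simp only [_root_.add_apply, ContinuousLinearMap.smulRight_apply,
      _root_.sub_apply, _root_.smul_apply, smul_eq_mul]
    erw [hz]
    simp
  obtain ⟨c, hc0, hc1, hck, hck', hcL⟩ : ∃ c : ℝ≥0, 0 < c ∧ c < 1 ∧ 1 + (c : ℝ) < k ∧
      1 < (k : ℝ) * (1 - c) ∧
      lipschitzExtensionConstant (EuclideanSpace ℝ (Fin (m + 1))) * c <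
          ‖(R.symm : EuclideanSpace ℝ (Fin (m + 1)) →L[ℝ] EuclideanSpace ℝ (Fin (m + 1)))‖₊⁻¹ := by
    have hk' : (1 : ℝ) < k := by exact_mod_cast hk
    have hN : 0 <
        ‖(R.symm : EuclideanSpace ℝ (Fin (m + 1)) →L[ℝ] EuclideanSpace ℝ (Fin (m + 1)))‖₊⁻¹ := by
      rw [inv_pos]
      exact (R.subsingleton_or_nnnorm_symm_pos).resolve_left
        (not_subsingleton_iff_nontrivial.2 inferInstance)
    have t1 : ∀ᶠ c : ℝ≥0 in 𝓝[>] 0, 0 < c := self_mem_nhdsWithin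
    have t2 : ∀ᶠ c : ℝ≥0 in 𝓝[>] 0, c < 1 :=
      nhdsWithin_le_nhds (eventually_lt_nhds zero_lt_one)
    have t3 : ∀ᶠ c : ℝ≥0 in 𝓝[>] 0, 1 + (c : ℝ) < k :=
      nhdsWithin_le_nhds ((by fun_prop : Continuous fun c : ℝ≥0 => 1 + (c : ℝ)).tendsto 0
        |>.eventually_lt_const (by simpa using hk'))
    have t4 : ∀ᶠ c : ℝ≥0 in 𝓝[>] 0, 1 < (k : ℝ) * (1 - c) :=
      nhdsWithin_le_nhds ((by fun_prop : Continuous fun c : ℝ≥0 => (k : ℝ) * (1 - c)).tendsto 0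
        |>.eventually_const_lt (by simpa using hk'))
    have t5 : ∀ᶠ c : ℝ≥0 in 𝓝[>] 0,
        lipschitzExtensionConstant (EuclideanSpace ℝ (Fin (m + 1))) * c <
          ‖(R.symm : EuclideanSpace ℝ (Fin (m + 1)) →L[ℝ] EuclideanSpace ℝ (Fin (m + 1)))‖₊⁻¹ :=
      nhdsWithin_le_nhds ((by fun_prop : Continuous fun c : ℝ≥0 =>
        lipschitzExtensionConstant (EuclideanSpace ℝ (Fin (m + 1))) * c).tendsto 0
        |>.eventually_lt_const (by simpa using hN))
    exact (t1.and (t2.and (t3.and (t4.and t5)))).exists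
  obtain ⟨S₁, hS₁, happ⟩ := hθd.approximates_deriv_on_nhds (Or.inr hc0)
  obtain ⟨Θ, hΘ⟩ := happ.exists_homeomorph_extension (Or.inr hcL)
  have hgc : Continuous fun x => ‖gradient Φ x‖₊ := by
    have : gradient Φ = fun x =>
        (InnerProductSpace.toDual ℝ (EuclideanSpace ℝ (Fin (m + 1)))).symm (fderiv ℝ Φ x) := rfl
    rw [this]
    exact ((InnerProductSpace.toDual ℝ (EuclideanSpace ℝ (Fin (m + 1)))).symm.continuous.comp
      (hΦ.continuous_fderiv (by norm_num))).nnnorm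
  have hpos : 0 < ‖gradient Φ x₀‖₊ := by simpa using h₀
  have hS₂ : ∀ᶠ x in 𝓝 x₀, ‖gradient Φ x‖₊ < k * ‖gradient Φ x₀‖₊ :=
    (hgc.tendsto x₀).eventually_lt_const (lt_mul_of_one_lt_left hpos hk)
  have hS₃ : ∀ᶠ x in 𝓝 x₀, ‖gradient Φ x₀‖₊ < k * ‖gradient Φ x‖₊ :=
    ((continuous_const.mul hgc).tendsto x₀).eventually_const_lt (lt_mul_of_one_lt_left hpos hk)
  obtain ⟨S, hSsub, hSo, hxS⟩ := mem_nhds_iff.1 (inter_mem hS₁ (inter_mem hS₂ hS₃))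
  have hΘS : ∀ x ∈ S, Θ x = θ x := fun x hx => (hΘ (hSsub hx).1).symm
  have hest : ∀ x ∈ S, ∀ y ∈ S, ‖Θ x - Θ y - R (x - y)‖ ≤ c * ‖x - y‖ := by
    intro x hx y hy
    rw [hΘS x hx, hΘS y hy]
    exact happ x (hSsub hx).1 y (hSsub hy).1
  refine ⟨S, hSo, hxS, Θ, fun x hx => ?_, ?_, ?_, fun x hx => ?_⟩
  · rw [hΘS x hx]; exact hθ0 x
  · refine LipschitzOnWith.of_dist_le_mul fun x hx y hy => ?_
    rw [dist_eq_norm, dist_eq_norm]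
    have h1 := hest x hx y hy
    have h2 := norm_add_le (Θ x - Θ y - R (x - y)) (R (x - y))
    rw [sub_add_cancel, hRnorm] at h2
    have h3 := mul_le_mul_of_nonneg_right hck.le (norm_nonneg (x - y))
    linarith
  · refine LipschitzOnWith.of_dist_le_mul ?_
    rintro _ ⟨x, hx, rfl⟩ _ ⟨y, hy, rfl⟩
    rw [Θ.symm_apply_apply, Θ.symm_apply_apply, dist_eq_norm, dist_eq_norm]
    have h1 := hest x hx y hy
    have h2 := norm_sub_le (Θ x - Θ y) (Θ x - Θ y - R (x - y))
    rw [sub_sub_cancel, hRnorm] at h2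
    have hk0 : (0 : ℝ) ≤ k := k.2
    have h3 : ‖x - y‖ * (1 - c) ≤ ‖Θ x - Θ y‖ := by linarith
    have h4 := mul_le_mul_of_nonneg_left h3 hk0
    have h5 := mul_le_mul_of_nonneg_right hck'.le (norm_nonneg (x - y))
    linarith
  · exact ⟨(hSsub hx).2.1.le, (hSsub hx).2.2.le⟩

lemma setLIntegral_inter_of_support_subset {X : Type*} [MeasurableSpace X] {μ : Measure X}
    {s t : Set X} (hs : MeasurableSet s) {f : X → ℝ≥0∞} (hf : f.support ⊆ s) :
    ∫⁻ x in s ∩ t, f x ∂μ = ∫⁻ x in t, f x ∂μ := by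
  rw [← Measure.restrict_restrict hs, setLIntegral_eq_of_support_subset hf]

lemma exists_layer_comparison {m : ℕ} {Φ : EuclideanSpace ℝ (Fin (m + 1)) → ℝ}
    (hΦ : ContDiff ℝ 1 Φ) {x₀ : EuclideanSpace ℝ (Fin (m + 1))} (h₀ : gradient Φ x₀ ≠ 0)
    {ψ : ℝ → ℝ≥0} (hψ : Measurable ψ) (hψfin : ∫⁻ t, ψ t ≠ ⊤)
    {c : ℝ≥0∞} (hc : (volume : Measure (EuclideanSpace ℝ (Fin m))) = c • μH[(m : ℝ)])
    {k : ℝ≥0} (hk : 1 < k) :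
    ∃ S : Set (EuclideanSpace ℝ (Fin (m + 1))), IsOpen S ∧ x₀ ∈ S ∧
      ∀ f : EuclideanSpace ℝ (Fin (m + 1)) → ℝ≥0, Continuous f → HasCompactSupport f →
        tsupport f ⊆ S → ∃ (P : ℝ → ℝ≥0∞) (l : ℝ≥0∞), Tendsto P (𝓝[>] 0) (𝓝 l) ∧ l ≠ ⊤ ∧
          (∀ s, ∫⁻ x, ENNReal.ofReal s⁻¹ * ψ (Φ x / s) * f x ≤ (k : ℝ≥0∞) ^ (m + 1) * P s ∧
            P s ≤ (k : ℝ≥0∞) ^ (m + 1) * ∫⁻ x, ENNReal.ofReal s⁻¹ * ψ (Φ x / s) * f x) ∧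
          l ≤ (k : ℝ≥0∞) ^ (m + 1) * ((∫⁻ t, ψ t) * c *
            ∫⁻ x in {x | Φ x = 0}, (‖gradient Φ x‖₊⁻¹ * f x : ℝ≥0) ∂μH[(m : ℝ)]) ∧
          (∫⁻ t, ψ t) * c *
            ∫⁻ x in {x | Φ x = 0}, (‖gradient Φ x‖₊⁻¹ * f x : ℝ≥0) ∂μH[(m : ℝ)] ≤
            (k : ℝ≥0∞) ^ (m + 1) * l := by
  obtain ⟨S, hSo, hxS, Θ, hΦΘ, hL, hL', hgr⟩ := exists_flattening_homeomorph hΦ h₀ hk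
  refine ⟨S, hSo, hxS, fun f hf hfc hfS => ?_⟩
  set a : ℝ≥0 := ‖gradient Φ x₀‖₊ with ha_def
  have ha : 0 < a := by simpa [a] using h₀
  set g : EuclideanSpace ℝ (Fin (m + 1)) → ℝ≥0 := fun y => f (Θ.symm y) with hg_def
  have hg : Continuous g := hf.comp Θ.symm.continuous
  have hgc : HasCompactSupport g := hfc.comp_homeomorph Θ.symm
  have hfz : ∀ x, x ∉ S → f x = 0 := fun x hx =>
    image_eq_zero_of_notMem_tsupport fun h => hx (hfS h)
  have hgz : ∀ y, y ∉ Θ '' S → g y = 0 := fun y hy =>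
    hfz _ fun h => hy ⟨Θ.symm y, h, by simp⟩
  have hgΘ : ∀ x, g (Θ x) = f x := fun x => by simp [g]
  have hfin : ∫⁻ y : EuclideanSpace ℝ (Fin m), g (consE 0 y) ≠ ⊤ := by
    have h1 : HasCompactSupport fun y : EuclideanSpace ℝ (Fin m) => g (consE 0 y) :=
      hgc.comp_isClosedEmbedding (isometry_consE_zero m).isClosedEmbedding
    have h2 : Continuous fun y : EuclideanSpace ℝ (Fin m) => g (consE 0 y) :=
      hg.comp (isometry_consE_zero m).continuous
    have h3 : Integrable (fun y : EuclideanSpace ℝ (Fin m) => (g (consE 0 y) : ℝ)) :=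
      (NNReal.continuous_coe.comp h2).integrable_of_hasCompactSupport
        (h1.comp_left (g := ((↑) : ℝ≥0 → ℝ)) rfl)
    simpa [HasFiniteIntegral, enorm] using h3.2.ne
  have hvol : ∀ F : EuclideanSpace ℝ (Fin m) → ℝ≥0∞,
      ∫⁻ y, F y = c * ∫⁻ y, F y ∂μH[(m : ℝ)] := fun F => by
    rw [hc, lintegral_smul_measure, smul_eq_mul]
  have hZS : Θ '' (S ∩ {x | Φ x = 0}) = {y | y 0 = 0} ∩ Θ '' S := by
    ext y
    simp only [mem_image, mem_inter_iff, mem_ofPred_eq]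
    have hane : (a : ℝ) ≠ 0 := by exact_mod_cast ha.ne'
    constructor
    · rintro ⟨x, ⟨h1, h2⟩, rfl⟩
      rw [hΦΘ x h1] at h2
      exact ⟨(mul_eq_zero.1 h2).resolve_left hane, x, h1, rfl⟩
    · rintro ⟨h1, x, h2, rfl⟩
      exact ⟨x, ⟨h2, by rw [hΦΘ x h2, h1, mul_zero]⟩, rfl⟩
  have hSm : MeasurableSet S := hSo.measurableSet
  have hΘSm : MeasurableSet (Θ '' S) := (Θ.isOpenMap S hSo).measurableSet
  have hZm : MeasurableSet {x | Φ x = 0} :=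
    (isClosed_eq hΦ.continuous continuous_const).measurableSet
  have hplane : ∫⁻ y in {y | y 0 = 0}, (g y : ℝ≥0∞) ∂μH[(m : ℝ)] =
      ∫⁻ y in Θ '' (S ∩ {x | Φ x = 0}), (g y : ℝ≥0∞) ∂μH[(m : ℝ)] := by
    rw [hZS, inter_comm, setLIntegral_inter_of_support_subset hΘSm]
    intro y hy
    by_contra h
    exact hy (by simpa using hgz y h)
  have hsurf : ∫⁻ x in {x | Φ x = 0}, (‖gradient Φ x‖₊⁻¹ * f x : ℝ≥0) ∂μH[(m : ℝ)] =
      ∫⁻ x in S ∩ {x | Φ x = 0}, (‖gradient Φ x‖₊⁻¹ * f x : ℝ≥0) ∂μH[(m : ℝ)] := by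
    rw [setLIntegral_inter_of_support_subset hSm]
    intro y hy
    by_contra h
    exact hy (by simp [hfz y h])
  have hkm : (k : ℝ≥0∞) ^ (m : ℝ) = (k : ℝ≥0∞) ^ m := ENNReal.rpow_natCast _ _
  have hkm1 : (k : ℝ≥0∞) ^ (((m + 1 : ℕ) : ℝ)) = (k : ℝ≥0∞) ^ (m + 1) := ENNReal.rpow_natCast _ _
  have hlow : ∫⁻ x in S ∩ {x | Φ x = 0}, (f x : ℝ≥0∞) ∂μH[(m : ℝ)] ≤
      (k * a : ℝ≥0) * ∫⁻ x in S ∩ {x | Φ x = 0}, (‖gradient Φ x‖₊⁻¹ * f x : ℝ≥0) ∂μH[(m : ℝ)] := by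
    rw [← lintegral_const_mul' _ _ ENNReal.coe_ne_top]
    refine setLIntegral_mono' (hSm.inter hZm) fun x hx => ?_
    rw [← ENNReal.coe_mul, ENNReal.coe_le_coe]
    have h1 := (hgr x hx.1).2
    have hpos : 0 < ‖gradient Φ x‖₊ := by
      by_contra h0
      have : ‖gradient Φ x‖₊ = 0 := by simpa using h0
      rw [this, mul_zero] at h1
      exact absurd h1 (not_le.2 ha)
    calc f x = ‖gradient Φ x‖₊ * (‖gradient Φ x‖₊⁻¹ * f x) := by field_simp
      _ ≤ _ := by gcongr; exact (hgr x hx.1).1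
  have hupp : ∫⁻ x in S ∩ {x | Φ x = 0}, (‖gradient Φ x‖₊⁻¹ * f x : ℝ≥0) ∂μH[(m : ℝ)] ≤
      (k * a⁻¹ : ℝ≥0) * ∫⁻ x in S ∩ {x | Φ x = 0}, (f x : ℝ≥0∞) ∂μH[(m : ℝ)] := by
    rw [← lintegral_const_mul' _ _ ENNReal.coe_ne_top]
    refine setLIntegral_mono' (hSm.inter hZm) fun x hx => ?_
    rw [← ENNReal.coe_mul, ENNReal.coe_le_coe]
    gcongr
    have h1 := (hgr x hx.1).2
    have hpos : 0 < ‖gradient Φ x‖₊ := by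
      by_contra h0
      have : ‖gradient Φ x‖₊ = 0 := by simpa using h0
      rw [this, mul_zero] at h1
      exact absurd h1 (not_le.2 ha)
    rw [inv_le_iff_one_le_mul₀ hpos]
    calc (1 : ℝ≥0) = a⁻¹ * a := by field_simp
      _ ≤ a⁻¹ * (k * ‖gradient Φ x‖₊) := by gcongr
      _ = _ := by ring
  have hsub := hL.mono (inter_subset_left (t := {x | Φ x = 0}))
  have hsub' := hL'.mono (image_mono (inter_subset_left (s := S) (t := {x | Φ x = 0})))
  have himg := setLIntegral_image_homeomorph_le Θ hsub (d := m) m.cast_nonneg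
    (fun y => (g y : ℝ≥0∞))
  have hpre := setLIntegral_comp_homeomorph_le Θ hsub' (d := m) m.cast_nonneg
    (fun y => (g y : ℝ≥0∞))
  simp only [hgΘ, hkm] at himg hpre
  rw [← hplane] at himg hpre
  rw [← hsurf] at hlow hupp
  set Ip := ∫⁻ y in {y | y 0 = 0}, (g y : ℝ≥0∞) ∂μH[(m : ℝ)]
  set Is := ∫⁻ x in {x | Φ x = 0}, (‖gradient Φ x‖₊⁻¹ * f x : ℝ≥0) ∂μH[(m : ℝ)]
  have haa : ((a⁻¹ : ℝ≥0) : ℝ≥0∞) * (a : ℝ≥0∞) = 1 := by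
    rw [← ENNReal.coe_mul, inv_mul_cancel₀ ha.ne', ENNReal.coe_one]
  have hofa : ENNReal.ofReal (a : ℝ)⁻¹ = ((a⁻¹ : ℝ≥0) : ℝ≥0∞) := by
    rw [← NNReal.coe_inv, ENNReal.ofReal_coe_nnreal]
  have hb1 : ((a⁻¹ : ℝ≥0) : ℝ≥0∞) * Ip ≤ (k : ℝ≥0∞) ^ (m + 1) * Is := by
    calc ((a⁻¹ : ℝ≥0) : ℝ≥0∞) * Ip
        ≤ ((a⁻¹ : ℝ≥0) : ℝ≥0∞) * ((k : ℝ≥0∞) ^ m * ((k * a : ℝ≥0) * Is)) := by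
          gcongr; exact himg.trans (by gcongr)
      _ = (((a⁻¹ : ℝ≥0) : ℝ≥0∞) * a) * ((k : ℝ≥0∞) ^ (m + 1) * Is) := by
          rw [ENNReal.coe_mul]; ring
      _ = _ := by rw [haa, one_mul]
  have hb2 : Is ≤ (k : ℝ≥0∞) ^ (m + 1) * (((a⁻¹ : ℝ≥0) : ℝ≥0∞) * Ip) := by
    calc Is ≤ (k * a⁻¹ : ℝ≥0) * ((k : ℝ≥0∞) ^ m * Ip) := hupp.trans (by gcongr)
      _ = _ := by rw [ENNReal.coe_mul]; ring
  have hIp : ∫⁻ y : EuclideanSpace ℝ (Fin m), (g (consE 0 y) : ℝ≥0∞) = c * Ip := by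
    rw [hvol, lintegral_consE_zero (fun x => (g x : ℝ≥0∞))]
  refine ⟨_, _, tendsto_lintegral_layer_hyperplane hψ hψfin hg hgc (a := a) (by exact_mod_cast ha),
    ?_, fun s => ?_, ?_, ?_⟩
  · exact ENNReal.mul_ne_top (by simp) (ENNReal.mul_ne_top hψfin hfin)
  · obtain ⟨C, -, -, hC⟩ := exists_volume_eq_smul_hausdorffMeasure (m + 1)
    set G : EuclideanSpace ℝ (Fin (m + 1)) → ℝ≥0∞ := fun y =>
      ENNReal.ofReal s⁻¹ * ψ (a * y 0 / s) * g y with hG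
    have hGΘ : EqOn (fun x => ENNReal.ofReal s⁻¹ * ψ (Φ x / s) * (f x : ℝ≥0∞))
        (fun x => G (Θ x)) S := by
      intro x hx
      simp only [hG, hgΘ]
      rw [hΦΘ x hx]
      rfl
    have e1 : ∫⁻ x, ENNReal.ofReal s⁻¹ * ψ (Φ x / s) * (f x : ℝ≥0∞) =
        C * ∫⁻ x in S, G (Θ x) ∂μH[((m + 1 : ℕ) : ℝ)] := by
      rw [← setLIntegral_congr_fun hSm hGΘ, setLIntegral_eq_of_support_subset, hC,
        lintegral_smul_measure, smul_eq_mul]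
      intro x hx
      by_contra h
      exact hx (by simp [hfz x h])
    have e2 : ∫⁻ y, G y = C * ∫⁻ y in Θ '' S, G y ∂μH[((m + 1 : ℕ) : ℝ)] := by
      rw [setLIntegral_eq_of_support_subset, hC, lintegral_smul_measure, smul_eq_mul]
      intro x hx
      by_contra h
      exact hx (by simp [hG, hgz x h])
    have i1 := setLIntegral_image_homeomorph_le Θ hL (d := (m + 1 : ℕ)) (Nat.cast_nonneg _) G
    have i2 := setLIntegral_comp_homeomorph_le Θ hL' (d := (m + 1 : ℕ)) (Nat.cast_nonneg _) G
    rw [hkm1] at i1 i2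
    rw [e1]
    change _ ≤ _ * (∫⁻ y, G y) ∧ (∫⁻ y, G y) ≤ _
    rw [e2, mul_left_comm _ C, mul_left_comm _ C]
    exact ⟨mul_le_mul_right i2 C, mul_le_mul_right i1 C⟩
  · rw [hIp, hofa]
    calc _ = (∫⁻ t, ψ t) * c * (((a⁻¹ : ℝ≥0) : ℝ≥0∞) * Ip) := by ring
      _ ≤ (∫⁻ t, ψ t) * c * ((k : ℝ≥0∞) ^ (m + 1) * Is) := by gcongr
      _ = _ := by ring
  · rw [hIp, hofa]
    calc _ ≤ (∫⁻ t, ψ t) * c * ((k : ℝ≥0∞) ^ (m + 1) * (((a⁻¹ : ℝ≥0) : ℝ≥0∞) * Ip)) := by gcongr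
      _ = _ := by ring

lemma exists_layer_subset_of_isOpen {X : Type*} [TopologicalSpace X] {Φ : X → ℝ}
    (hΦ : Continuous Φ) (hc : IsCompact {x | Φ x ≤ 0}) {O : Set X} (hO : IsOpen O)
    (hZ : {x | Φ x = 0} ⊆ O) : ∃ δ > 0, {x | -δ ≤ Φ x ∧ Φ x ≤ 0} ⊆ O := by
  have hK : IsCompact ({x | Φ x ≤ 0} \ O) := hc.diff hO
  rcases ({x | Φ x ≤ 0} \ O).eq_empty_or_nonempty with he | hne
  · exact ⟨1, one_pos, fun x hx => by
      by_contra h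
      exact (he ▸ (⟨hx.2, h⟩ : x ∈ {x | Φ x ≤ 0} \ O) : x ∈ (∅ : Set X))⟩
  · obtain ⟨y, hy, hmax⟩ := hK.exists_isMaxOn hne hΦ.continuousOn
    have hy0 : Φ y < 0 := lt_of_le_of_ne hy.1 fun h => hy.2 (hZ h)
    refine ⟨-Φ y / 2, by linarith, fun x hx => ?_⟩
    by_contra h
    have h1 : Φ x ≤ Φ y := hmax (⟨hx.2, h⟩ : x ∈ {x | Φ x ≤ 0} \ O)
    have h2 := hx.1
    linarith

lemma exists_layer_comparison_global {m : ℕ} {Φ : EuclideanSpace ℝ (Fin (m + 1)) → ℝ}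
    (hΦ : ContDiff ℝ 1 Φ) (hcpt : IsCompact {x | Φ x ≤ 0})
    (hgrad : ∀ x, Φ x = 0 → gradient Φ x ≠ 0)
    {ψ : ℝ → ℝ≥0} (hψ : Measurable ψ) (hψfin : ∫⁻ t, ψ t ≠ ⊤)
    (hψs : ∀ t, ψ t ≠ 0 → -2 ≤ t ∧ t ≤ -1)
    {c : ℝ≥0∞} (hc : (volume : Measure (EuclideanSpace ℝ (Fin m))) = c • μH[(m : ℝ)])
    {k : ℝ≥0} (hk : 1 < k) {f : EuclideanSpace ℝ (Fin (m + 1)) → ℝ≥0} (hf : Continuous f) :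
    ∃ (P : ℝ → ℝ≥0∞) (l : ℝ≥0∞), Tendsto P (𝓝[>] 0) (𝓝 l) ∧ l ≠ ⊤ ∧
      (∀ᶠ s in 𝓝[>] 0,
        ∫⁻ x, ENNReal.ofReal s⁻¹ * ψ (Φ x / s) * f x ≤ (k : ℝ≥0∞) ^ (m + 1) * P s ∧
        P s ≤ (k : ℝ≥0∞) ^ (m + 1) * ∫⁻ x, ENNReal.ofReal s⁻¹ * ψ (Φ x / s) * f x) ∧
      l ≤ (k : ℝ≥0∞) ^ (m + 1) * ((∫⁻ t, ψ t) * c *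
        ∫⁻ x in {x | Φ x = 0}, (‖gradient Φ x‖₊⁻¹ * f x : ℝ≥0) ∂μH[(m : ℝ)]) ∧
      (∫⁻ t, ψ t) * c *
        ∫⁻ x in {x | Φ x = 0}, (‖gradient Φ x‖₊⁻¹ * f x : ℝ≥0) ∂μH[(m : ℝ)] ≤
        (k : ℝ≥0∞) ^ (m + 1) * l := by
  have hZc : IsCompact {x | Φ x = 0} :=
    hcpt.of_isClosed_subset (isClosed_eq hΦ.continuous continuous_const) fun x hx =>
      le_of_eq hx
  have hloc := fun x : {x | Φ x = 0} =>
    exists_layer_comparison hΦ (hgrad x.1 x.2) hψ hψfin hc hk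
  choose S hSo hxS hS using hloc
  obtain ⟨t, ht⟩ := hZc.elim_finite_subcover S hSo fun x hx => mem_iUnion.2 ⟨⟨x, hx⟩, hxS ⟨x, hx⟩⟩
  have hOo : IsOpen (⋃ i ∈ t, S i) := isOpen_biUnion fun i _ => hSo i
  obtain ⟨δ, hδ, hδO⟩ := exists_layer_subset_of_isOpen hΦ.continuous hcpt hOo ht
  set T : Set (EuclideanSpace ℝ (Fin (m + 1))) := {x | -δ ≤ Φ x ∧ Φ x ≤ 0} with hT
  have hTc : IsCompact T := hcpt.of_isClosed_subset
    ((isClosed_le continuous_const hΦ.continuous).inter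
      (isClosed_le hΦ.continuous continuous_const)) fun x hx => hx.2
  let e : Fin t.card ≃ t := t.equivFin.symm
  obtain ⟨ρ, hρS, hρ1, hρ0, hρc⟩ := exists_continuous_sum_one_of_isOpen_isCompact
    (s := fun i : Fin t.card => S (e i)) (fun i => hSo _) hTc (by
      intro x hx
      obtain ⟨i, hi, hxi⟩ := mem_iUnion₂.1 (hδO hx)
      exact mem_iUnion.2 ⟨e.symm ⟨i, hi⟩, by simpa using hxi⟩)
  set F : Fin t.card → EuclideanSpace ℝ (Fin (m + 1)) → ℝ≥0 :=
    fun i x => (ρ i x).toNNReal * f x with hF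
  have hFc : ∀ i, Continuous (F i) := fun i =>
    (continuous_real_toNNReal.comp (ρ i).continuous).mul hf
  have hFsub : ∀ i, tsupport (F i) ⊆ tsupport (ρ i) := fun i =>
    closure_mono fun x hx h => hx (by simp only [hF, h]; simp)
  have hFsum : ∀ x ∈ T, ∑ i, F i x = f x := by
    intro x hx
    have h1 : ∑ i, ρ i x = 1 := by simpa using hρ1 hx
    simp only [hF]
    rw [← Finset.sum_mul, ← Real.toNNReal_sum_of_nonneg fun i _ => (hρ0 i x).1, h1]
    simp
  have hex := fun i => hS (e i) (F i) (hFc i)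
    (HasCompactSupport.of_support_subset_isCompact (hρc i)
      ((subset_tsupport _).trans (hFsub i))) ((hFsub i).trans (hρS i))
  choose P l hPl hlt hP hl1 hl2 using hex
  have hlayer : ∀ᶠ s in 𝓝[>] (0 : ℝ), ∫⁻ x, ENNReal.ofReal s⁻¹ * ψ (Φ x / s) * (f x : ℝ≥0∞) =
      ∑ i, ∫⁻ x, ENNReal.ofReal s⁻¹ * ψ (Φ x / s) * (F i x : ℝ≥0∞) := by
    filter_upwards [Ioo_mem_nhdsGT (half_pos hδ)] with s hs
    rw [← lintegral_finsetSum]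
    · refine lintegral_congr fun x => ?_
      rw [← Finset.mul_sum]
      by_cases h0 : ψ (Φ x / s) = 0
      · simp [h0]
      · have h1 := hψs _ h0
        rw [le_div_iff₀ hs.1, div_le_iff₀ hs.1] at h1
        have hx : x ∈ T := ⟨by linarith [hs.2], by linarith [hs.1]⟩
        rw [← hFsum x hx, ENNReal.ofNNReal_finsetSum]
    · intro i _
      exact (measurable_const.mul (hψ.comp (hΦ.continuous.measurable.div_const
        s)).coe_nnreal_ennreal).mul (hFc i).measurable.coe_nnreal_ennreal
  have hZm : MeasurableSet {x | Φ x = 0} := hZc.measurableSet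
  have hgm : Measurable fun x => ‖gradient Φ x‖₊⁻¹ := by
    have : Continuous (gradient Φ) :=
      (InnerProductSpace.toDual ℝ (EuclideanSpace ℝ (Fin (m + 1)))).symm.continuous.comp
        (hΦ.continuous_fderiv (by norm_num))
    exact this.nnnorm.measurable.inv
  have hsurf : ∫⁻ x in {x | Φ x = 0}, (‖gradient Φ x‖₊⁻¹ * f x : ℝ≥0) ∂μH[(m : ℝ)] =
      ∑ i, ∫⁻ x in {x | Φ x = 0}, (‖gradient Φ x‖₊⁻¹ * F i x : ℝ≥0) ∂μH[(m : ℝ)] := by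
    rw [← lintegral_finsetSum]
    · refine setLIntegral_congr_fun hZm fun x hx => ?_
      have hx0 : Φ x = 0 := hx
      have hx' : x ∈ T := ⟨by rw [hx0]; linarith, hx0.le⟩
      rw [← ENNReal.ofNNReal_finsetSum, ← Finset.mul_sum, hFsum x hx']
    · intro i _
      exact (hgm.mul (hFc i).measurable).coe_nnreal_ennreal
  refine ⟨fun s => ∑ i, P i s, ∑ i, l i, tendsto_finsetSum _ fun i _ => hPl i,
    by simpa using fun i => (hlt i), ?_, ?_, ?_⟩
  · filter_upwards [hlayer] with s hs
    rw [hs, Finset.mul_sum, Finset.mul_sum]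
    exact ⟨Finset.sum_le_sum fun i _ => (hP i s).1, Finset.sum_le_sum fun i _ => (hP i s).2⟩
  · rw [hsurf, Finset.mul_sum, Finset.mul_sum]
    exact Finset.sum_le_sum fun i _ => hl1 i
  · rw [hsurf, Finset.mul_sum, Finset.mul_sum]
    exact Finset.sum_le_sum fun i _ => hl2 i

lemma tendsto_lintegral_layer {m : ℕ} {Φ : EuclideanSpace ℝ (Fin (m + 1)) → ℝ}
    (hΦ : ContDiff ℝ 1 Φ) (hcpt : IsCompact {x | Φ x ≤ 0})
    (hgrad : ∀ x, Φ x = 0 → gradient Φ x ≠ 0)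
    {ψ : ℝ → ℝ≥0} (hψ : Measurable ψ) (hψfin : ∫⁻ t, ψ t ≠ ⊤)
    (hψs : ∀ t, ψ t ≠ 0 → -2 ≤ t ∧ t ≤ -1)
    {c : ℝ≥0∞} (hc : (volume : Measure (EuclideanSpace ℝ (Fin m))) = c • μH[(m : ℝ)])
    {f : EuclideanSpace ℝ (Fin (m + 1)) → ℝ≥0} (hf : Continuous f) :
    (∫⁻ t, ψ t) * c *
        ∫⁻ x in {x | Φ x = 0}, (‖gradient Φ x‖₊⁻¹ * f x : ℝ≥0) ∂μH[(m : ℝ)] ≠ ⊤ ∧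
      Tendsto (fun s : ℝ => ∫⁻ x, ENNReal.ofReal s⁻¹ * ψ (Φ x / s) * f x) (𝓝[>] 0)
        (𝓝 ((∫⁻ t, ψ t) * c *
          ∫⁻ x in {x | Φ x = 0}, (‖gradient Φ x‖₊⁻¹ * f x : ℝ≥0) ∂μH[(m : ℝ)])) := by
  have main := fun (k : ℝ≥0) (hk : 1 < k) =>
    exists_layer_comparison_global hΦ hcpt hgrad hψ hψfin hψs hc hk hf
  set A := (∫⁻ t, ψ t) * c *
    ∫⁻ x in {x | Φ x = 0}, (‖gradient Φ x‖₊⁻¹ * f x : ℝ≥0) ∂μH[(m : ℝ)]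
  have hpow : ∀ k : ℝ≥0, (k : ℝ≥0∞) ^ (m + 1) ≠ ⊤ := fun k => by simp
  have hA : A ≠ ⊤ := by
    obtain ⟨P, l, -, hl, -, -, h2⟩ := main 2 (by norm_num)
    exact ne_top_of_le_ne_top (ENNReal.mul_ne_top (hpow 2) hl) h2
  have hlim : ∀ b : ℝ≥0∞, b ≠ ⊤ → Tendsto (fun k : ℝ≥0 =>
      (k : ℝ≥0∞) ^ (m + 1) * ((k : ℝ≥0∞) ^ (m + 1) * b)) (𝓝[>] 1) (𝓝 b) := by
    intro b hb
    lift b to ℝ≥0 using hb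
    have : Continuous fun k : ℝ≥0 => k ^ (m + 1) * (k ^ (m + 1) * b) := by fun_prop
    have h1 := this.tendsto 1
    simp only [one_pow, one_mul] at h1
    have h2 := ENNReal.tendsto_coe.2 (h1.mono_left (nhdsWithin_le_nhds (s := Ioi (1 : ℝ≥0))))
    simpa using h2
  refine ⟨hA, tendsto_order.2 ⟨fun b hb => ?_, fun b hb => ?_⟩⟩
  · obtain ⟨k, hkb, hk⟩ := (((hlim b hb.ne_top).eventually_lt_const hb).and
      self_mem_nhdsWithin).exists
    obtain ⟨P, l, hP, hl, hcmp, -, h2⟩ := main k hk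
    have hbl : (k : ℝ≥0∞) ^ (m + 1) * b < l := by
      by_contra! h
      exact absurd (h2.trans (by gcongr)) (not_le.2 hkb)
    filter_upwards [hcmp, hP.eventually_const_lt hbl] with s h3 h4
    by_contra! h
    exact absurd (h3.2.trans (by gcongr)) (not_le.2 h4)
  · obtain ⟨k, hkb, hk⟩ := (((hlim A hA).eventually_lt_const hb).and
      self_mem_nhdsWithin).exists
    obtain ⟨P, l, hP, hl, hcmp, h1, -⟩ := main k hk
    have hbl : (k : ℝ≥0∞) ^ (m + 1) * l < b := lt_of_le_of_lt (by gcongr) hkb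
    filter_upwards [hcmp, (ENNReal.Tendsto.const_mul hP
      (Or.inr (hpow k))).eventually_lt_const hbl] with s h3 h4
    exact h3.1.trans_lt h4

lemma tendsto_integral_layer_of_nonneg {m : ℕ} {Φ : EuclideanSpace ℝ (Fin (m + 1)) → ℝ}
    (hΦ : ContDiff ℝ 1 Φ) (hcpt : IsCompact {x | Φ x ≤ 0})
    (hgrad : ∀ x, Φ x = 0 → gradient Φ x ≠ 0)
    {ψ : ℝ → ℝ≥0} (hψ : Measurable ψ) (hψfin : ∫⁻ t, ψ t ≠ ⊤) (hψ0 : ∫⁻ t, ψ t ≠ 0)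
    (hψs : ∀ t, ψ t ≠ 0 → -2 ≤ t ∧ t ≤ -1)
    {c : ℝ≥0∞} (hc0 : c ≠ 0)
    (hc : (volume : Measure (EuclideanSpace ℝ (Fin m))) = c • μH[(m : ℝ)])
    {f : EuclideanSpace ℝ (Fin (m + 1)) → ℝ≥0} (hf : Continuous f) :
    IntegrableOn (fun x => ‖gradient Φ x‖⁻¹ * f x) {x | Φ x = 0} μH[(m : ℝ)] ∧
      Tendsto (fun s : ℝ => ∫ x, s⁻¹ * ψ (Φ x / s) * f x) (𝓝[>] 0)
        (𝓝 (((∫⁻ t, ψ t) * c).toReal *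
          ∫ x in {x | Φ x = 0}, ‖gradient Φ x‖⁻¹ * f x ∂μH[(m : ℝ)])) := by
  obtain ⟨htop, hlim⟩ := tendsto_lintegral_layer hΦ hcpt hgrad hψ hψfin hψs hc hf
  have hgm : Measurable fun x => ‖gradient Φ x‖₊⁻¹ * f x := by
    have : Continuous (gradient Φ) :=
      (InnerProductSpace.toDual ℝ (EuclideanSpace ℝ (Fin (m + 1)))).symm.continuous.comp
        (hΦ.continuous_fderiv (by norm_num))
    exact this.nnnorm.measurable.inv.mul hf.measurable
  have hK : (∫⁻ t, ψ t) * c ≠ 0 := mul_ne_zero hψ0 hc0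
  have hfin : ∫⁻ x in {x | Φ x = 0}, (‖gradient Φ x‖₊⁻¹ * f x : ℝ≥0) ∂μH[(m : ℝ)] ≠ ⊤ :=
    fun h => htop (by rw [h, ENNReal.mul_top hK])
  have hreal : ∀ x, ‖gradient Φ x‖⁻¹ * f x = ((‖gradient Φ x‖₊⁻¹ * f x : ℝ≥0) : ℝ) :=
    fun x => by simp
  refine ⟨?_, ?_⟩
  · simp only [hreal]
    refine ⟨hgm.coe_nnreal_real.aestronglyMeasurable, ?_⟩
    simpa [HasFiniteIntegral, enorm, lt_top_iff_ne_top] using hfin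
  · have h1 : ∫ x in {x | Φ x = 0}, ‖gradient Φ x‖⁻¹ * f x ∂μH[(m : ℝ)] =
        (∫⁻ x in {x | Φ x = 0}, (‖gradient Φ x‖₊⁻¹ * f x : ℝ≥0) ∂μH[(m : ℝ)]).toReal := by
      simp only [hreal]
      rw [integral_eq_lintegral_of_nonneg_ae (Eventually.of_forall fun x => NNReal.coe_nonneg _)
        hgm.coe_nnreal_real.aestronglyMeasurable]
      simp only [ENNReal.ofReal_coe_nnreal]
    rw [h1, ← ENNReal.toReal_mul]
    refine ((ENNReal.tendsto_toReal htop).comp hlim).congr' ?_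
    filter_upwards [self_mem_nhdsWithin] with s hs
    have hs' : 0 < s := hs
    rw [integral_eq_lintegral_of_nonneg_ae]
    · simp only [Function.comp]
      congr 1
      refine lintegral_congr fun x => ?_
      rw [ENNReal.ofReal_mul (by positivity), ENNReal.ofReal_mul (by positivity),
        ENNReal.ofReal_coe_nnreal, ENNReal.ofReal_coe_nnreal]
    · exact Eventually.of_forall fun x => by positivity
    · exact (((hψ.comp (hΦ.continuous.measurable.div_const s)).coe_nnreal_real.const_mul
        _).mul hf.measurable.coe_nnreal_real).aestronglyMeasurable

lemma tendsto_integral_layer {m : ℕ} {Φ : EuclideanSpace ℝ (Fin (m + 1)) → ℝ}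
    (hΦ : ContDiff ℝ 1 Φ) (hcpt : IsCompact {x | Φ x ≤ 0})
    (hgrad : ∀ x, Φ x = 0 → gradient Φ x ≠ 0)
    {ψ : ℝ → ℝ≥0} (hψ : Continuous ψ) (hψfin : ∫⁻ t, ψ t ≠ ⊤) (hψ0 : ∫⁻ t, ψ t ≠ 0)
    (hψs : ∀ t, ψ t ≠ 0 → -2 ≤ t ∧ t ≤ -1)
    {c : ℝ≥0∞} (hc0 : c ≠ 0)
    (hc : (volume : Measure (EuclideanSpace ℝ (Fin m))) = c • μH[(m : ℝ)])
    {g : EuclideanSpace ℝ (Fin (m + 1)) → ℝ} (hg : Continuous g) :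
    IntegrableOn (fun x => ‖gradient Φ x‖⁻¹ * g x) {x | Φ x = 0} μH[(m : ℝ)] ∧
      Tendsto (fun s : ℝ => ∫ x, s⁻¹ * ψ (Φ x / s) * g x) (𝓝[>] 0)
        (𝓝 (((∫⁻ t, ψ t) * c).toReal *
          ∫ x in {x | Φ x = 0}, ‖gradient Φ x‖⁻¹ * g x ∂μH[(m : ℝ)])) := by
  have hp : Continuous fun x => (g x).toNNReal := continuous_real_toNNReal.comp hg
  have hn : Continuous fun x => (-g x).toNNReal := continuous_real_toNNReal.comp hg.neg
  obtain ⟨hpi, hpl⟩ := tendsto_integral_layer_of_nonneg hΦ hcpt hgrad hψ.measurable hψfin hψ0 hψs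
    hc0 hc hp
  obtain ⟨hni, hnl⟩ := tendsto_integral_layer_of_nonneg hΦ hcpt hgrad hψ.measurable hψfin hψ0 hψs
    hc0 hc hn
  have hsplit : ∀ x, g x = (g x).toNNReal - (-g x).toNNReal := fun x => by
    rw [Real.coe_toNNReal', Real.coe_toNNReal']
    exact (max_zero_sub_max_neg_zero_eq_self (g x)).symm
  have hsub : ∀ a x, a * g x = a * (g x).toNNReal - a * (-g x).toNNReal := fun a x => by
    rw [← mul_sub, ← hsplit]
  refine ⟨(hpi.sub hni).congr (Eventually.of_forall fun x => (hsub _ _).symm), ?_⟩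
  have hsurf : ∫ x in {x | Φ x = 0}, ‖gradient Φ x‖⁻¹ * g x ∂μH[(m : ℝ)] =
      ∫ x in {x | Φ x = 0}, ‖gradient Φ x‖⁻¹ * ((g x).toNNReal : ℝ) ∂μH[(m : ℝ)] -
      ∫ x in {x | Φ x = 0}, ‖gradient Φ x‖⁻¹ * ((-g x).toNNReal : ℝ) ∂μH[(m : ℝ)] := by
    rw [← integral_sub hpi hni]
    exact integral_congr_ae (Eventually.of_forall fun x => hsub _ _)
  rw [hsurf, mul_sub]
  refine (hpl.sub hnl).congr' ?_
  filter_upwards [self_mem_nhdsWithin] with s hs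
  have hs' : 0 < s := hs
  have hint : ∀ f : EuclideanSpace ℝ (Fin (m + 1)) → ℝ≥0, Continuous f →
      Integrable fun x => s⁻¹ * (ψ (Φ x / s) : ℝ) * (f x : ℝ) := by
    intro f hf
    have hΦc := hΦ.continuous
    refine Continuous.integrable_of_hasCompactSupport (by fun_prop)
      (HasCompactSupport.of_support_subset_isCompact hcpt fun x hx => ?_)
    have h0 : ψ (Φ x / s) ≠ 0 := fun h => hx (by simp [h])
    have := (hψs _ h0).2
    rw [div_le_iff₀ hs'] at this
    exact this.trans (by linarith)
  rw [← integral_sub (hint _ hp) (hint _ hn)]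
  exact integral_congr_ae (Eventually.of_forall fun x => (hsub _ _).symm)

lemma exists_layer_cutoff : ∃ (η : ℝ → ℝ) (ψ : ℝ → ℝ≥0), Continuous ψ ∧
    (∀ t, HasDerivAt η (-(ψ t : ℝ)) t) ∧ (∀ t, 0 ≤ η t ∧ η t ≤ 1) ∧ (∀ t ≤ -2, η t = 1) ∧
    (∀ t, -1 ≤ t → η t = 0) ∧ (∀ t, ψ t ≠ 0 → -2 ≤ t ∧ t ≤ -1) ∧
    ∫⁻ t, ψ t ≠ 0 ∧ ∫⁻ t, ψ t ≠ ⊤ := by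
  set η : ℝ → ℝ := fun t => Real.smoothTransition (-t - 1) with hη
  have hηd : ContDiff ℝ 1 η := Real.smoothTransition.contDiff.comp (by fun_prop)
  have hηanti : Antitone η := fun a b hab => Real.smoothTransition.monotone (by linarith)
  have hder : ∀ t, deriv η t ≤ 0 := fun t => hηanti.deriv_nonpos
  have h1 : ∀ t ≤ -2, η t = 1 := fun t ht => Real.smoothTransition.one_of_one_le (by linarith)
  have h0 : ∀ t, -1 ≤ t → η t = 0 := fun t ht => Real.smoothTransition.zero_of_nonpos (by linarith)
  have hcoe : ∀ t, ((-deriv η t).toNNReal : ℝ) = -deriv η t := fun t =>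
    Real.coe_toNNReal _ (by linarith [hder t])
  have hd : ∀ t, HasDerivAt η (-((-deriv η t).toNNReal : ℝ)) t := fun t => by
    rw [hcoe, neg_neg]
    exact (hηd.differentiable (by norm_num) t).hasDerivAt
  have hc : Continuous fun t => (-deriv η t).toNNReal :=
    continuous_real_toNNReal.comp (hηd.continuous_deriv le_rfl).neg
  have hs : ∀ t, (-deriv η t).toNNReal ≠ 0 → -2 ≤ t ∧ t ≤ -1 := by
    intro t ht
    by_contra h
    apply ht
    have : deriv η t = 0 := by
      rcases not_and_or.1 h with h | h
      · have : η =ᶠ[𝓝 t] fun _ => 1 := by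
          filter_upwards [Iio_mem_nhds (not_le.1 h)] with y hy using h1 y (le_of_lt hy)
        rw [this.deriv_eq, deriv_const]
      · have : η =ᶠ[𝓝 t] fun _ => 0 := by
          filter_upwards [Ioi_mem_nhds (not_le.1 h)] with y hy using h0 y (le_of_lt hy)
        rw [this.deriv_eq, deriv_const]
    simp [this]
  refine ⟨η, fun t => (-deriv η t).toNNReal, hc, hd,
    fun t => ⟨Real.smoothTransition.nonneg _, Real.smoothTransition.le_one _⟩, h1, h0, hs, ?_, ?_⟩
  · intro h
    rw [lintegral_eq_zero_iff hc.measurable.coe_nnreal_ennreal] at h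
    have hz : (fun t => (-deriv η t).toNNReal) = 0 :=
      (hc.ae_eq_iff_eq (μ := volume) continuous_const).1 (by
        filter_upwards [h] with t ht
        exact ENNReal.coe_eq_zero.1 ht)
    have hdz : ∀ t, deriv η t = 0 := fun t => by
      have h2 := hcoe t
      have h3 : (-deriv η t).toNNReal = 0 := congrFun hz t
      rw [h3] at h2
      simpa using h2.symm
    have := is_const_of_deriv_eq_zero (hηd.differentiable (by norm_num)) hdz (-2) (-1)
    rw [h1 _ le_rfl, h0 _ le_rfl] at this
    exact one_ne_zero this
  · have hi : Integrable fun t => ((-deriv η t).toNNReal : ℝ) :=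
      (NNReal.continuous_coe.comp hc).integrable_of_hasCompactSupport
        (HasCompactSupport.of_support_subset_isCompact (isCompact_Icc (a := (-2 : ℝ)) (b := -1))
          fun t ht => hs t fun h => ht (by simp [h]))
    have h2 := hi.2
    simp only [HasFiniteIntegral, enorm, NNReal.nnnorm_eq] at h2
    exact h2.ne

lemma integral_fderiv_apply_eq_zero {E : Type*} [NormedAddCommGroup E] [NormedSpace ℝ E]
    [FiniteDimensional ℝ E] [MeasurableSpace E] [BorelSpace E] {μ : Measure E}
    [μ.IsAddHaarMeasure] {g : E → ℝ} (hg : Differentiable ℝ g) (hgc : HasCompactSupport g)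
    {M : ℝ} (hM : ∀ x, ‖fderiv ℝ g x‖ ≤ M) (v : E) : ∫ x, fderiv ℝ g x v ∂μ = 0 := by
  have hgi : Integrable g μ := hg.continuous.integrable_of_hasCompactSupport hgc
  have hdi : Integrable (fun x => fderiv ℝ g x v) μ := by
    have hm : Measurable fun x => fderiv ℝ g x v := measurable_fderiv_apply_const ℝ g v
    have hK : IsCompact (tsupport g) := hgc
    have hon : IntegrableOn (fun x => fderiv ℝ g x v) (tsupport g) μ :=
      Measure.integrableOn_of_bounded hK.measure_lt_top.ne hm.aestronglyMeasurable
        (M := M * ‖v‖) (Eventually.of_forall fun x =>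
          ((fderiv ℝ g x).le_opNorm v).trans (by gcongr; exact hM x))
    refine (integrableOn_iff_integrable_of_support_subset fun x hx => ?_).1 hon
    exact support_fderiv_subset ℝ fun h => hx (by simp [h])
  have := integral_mul_fderiv_eq_neg_fderiv_mul_of_integrable (μ := μ) (f := fun _ => (1 : ℝ))
    (g := g) (v := v) (by simp) (by simpa using hdi) (by simpa using hgi)
    (fun x _ => differentiableAt_const _) fun x _ => hg x
  simpa using this

lemma exists_integral_fderiv_eq_surface_integral {m : ℕ} {Φ : EuclideanSpace ℝ (Fin (m + 1)) → ℝ}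
    (hΦ : ContDiff ℝ 1 Φ) (hcpt : IsCompact {x | Φ x ≤ 0})
    (hgrad : ∀ x, Φ x = 0 → gradient Φ x ≠ 0) :
    ∃ C : ℝ, 0 < C ∧ ∀ f : EuclideanSpace ℝ (Fin (m + 1)) → ℝ,
      ContinuousOn f {x | Φ x ≤ 0} → (∀ x, Φ x < 0 → DifferentiableAt ℝ f x) →
      (∃ M : ℝ, ∀ x, Φ x < 0 → ‖fderiv ℝ f x‖ ≤ M) → ∀ v,
      IntegrableOn (fun x => ‖gradient Φ x‖⁻¹ * (f x * fderiv ℝ Φ x v)) {x | Φ x = 0} μH[(m : ℝ)] ∧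
      IntegrableOn (fun x => fderiv ℝ f x v) {x | Φ x < 0} ∧
      ∫ x in {x | Φ x < 0}, fderiv ℝ f x v =
        C * ∫ x in {x | Φ x = 0}, ‖gradient Φ x‖⁻¹ * (f x * fderiv ℝ Φ x v) ∂μH[(m : ℝ)] := by
  obtain ⟨η, ψ, hψc, hη, hη01, hη1, hη0, hψs, hψ0, hψfin⟩ := exists_layer_cutoff
  obtain ⟨c, hc0, hcfin, hc⟩ := exists_volume_eq_smul_hausdorffMeasure m
  refine ⟨((∫⁻ t, ψ t) * c).toReal, ENNReal.toReal_pos (mul_ne_zero hψ0 hc0)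
    (ENNReal.mul_ne_top hψfin hcfin), fun f hf hfd ⟨M, hM⟩ v => ?_⟩
  have hΦc := hΦ.continuous
  have hΦ' : Continuous fun x => fderiv ℝ Φ x v :=
    (hΦ.continuous_fderiv (by norm_num)).clm_apply continuous_const
  have hΦd := hΦ.differentiable (by norm_num)
  have hΩo : IsOpen {x | Φ x < 0} := isOpen_lt hΦc continuous_const
  have hKc : IsClosed {x | Φ x ≤ 0} := isClosed_le hΦc continuous_const
  have hvol : volume {x | Φ x < 0} ≠ ⊤ :=
    ((measure_mono fun x (hx : Φ x < 0) => hx.le).trans_lt hcpt.measure_lt_top).ne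
  -- a continuous extension of the normal flux density
  obtain ⟨G, hG⟩ := ContinuousMap.exists_restrict_eq hKc
    (⟨_, continuousOn_iff_continuous_domRestrict.1 (hf.mul hΦ'.continuousOn)⟩ :
      C({x | Φ x ≤ 0}, ℝ))
  have hGf : ∀ x, Φ x ≤ 0 → G x = f x * fderiv ℝ Φ x v := fun x hx =>
    congrArg (fun k => k ⟨x, hx⟩) hG
  obtain ⟨hsi, hlim⟩ := tendsto_integral_layer hΦ hcpt hgrad hψc hψfin hψ0 hψs hc0 hc G.continuous
  have hZm : MeasurableSet {x | Φ x = 0} := measurableSet_eq_fun hΦc.measurable measurable_const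
  have hsurf : EqOn (fun x => ‖gradient Φ x‖⁻¹ * G x)
      (fun x => ‖gradient Φ x‖⁻¹ * (f x * fderiv ℝ Φ x v)) {x | Φ x = 0} := fun x hx => by
    simp only [hGf x (le_of_eq hx)]
  have hdm : Measurable fun x => fderiv ℝ f x v := measurable_fderiv_apply_const ℝ f v
  have hdb : ∀ x, Φ x < 0 → ‖fderiv ℝ f x v‖ ≤ M * ‖v‖ := fun x hx =>
    ((fderiv ℝ f x).le_opNorm v).trans (by gcongr; exact hM x hx)
  have hdi : IntegrableOn (fun x => fderiv ℝ f x v) {x | Φ x < 0} :=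
    Measure.integrableOn_of_bounded hvol hdm.aestronglyMeasurable (M := M * ‖v‖)
      ((ae_restrict_iff' hΩo.measurableSet).2 (Eventually.of_forall hdb))
  have hηc : Continuous η := continuous_iff_continuousAt.2 fun t => (hη t).continuousAt
  refine ⟨hsi.congr_fun hsurf hZm, hdi, ?_⟩
  rw [← setIntegral_congr_fun hZm hsurf]
  -- the truncated identity
  have hkey : ∀ s : ℝ, 0 < s → ∫ x in {x | Φ x < 0}, η (Φ x / s) * fderiv ℝ f x v =
      ∫ x, s⁻¹ * ψ (Φ x / s) * G x := by
    intro s hs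
    have hderiv : ∀ x, Φ x < 0 → HasFDerivAt (fun x => η (Φ x / s) * f x)
        (η (Φ x / s) • fderiv ℝ f x + f x • (-(ψ (Φ x / s) : ℝ)) • s⁻¹ • fderiv ℝ Φ x) x := by
      intro x hx
      have h1 : HasFDerivAt (fun x => Φ x / s) (s⁻¹ • fderiv ℝ Φ x) x := by
        simpa [div_eq_mul_inv] using (hΦd x).hasFDerivAt.mul_const s⁻¹
      exact ((hη _).comp_hasFDerivAt x h1).mul (hfd x hx).hasFDerivAt
    have hzero : ∀ x, 0 ≤ Φ x → (fun x => η (Φ x / s) * f x) =ᶠ[𝓝 x] fun _ => 0 := by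
      intro x hx
      filter_upwards [hΦc.continuousAt.eventually_const_lt (show -s < Φ x by linarith)] with y hy
      rw [hη0 _ (by rw [le_div_iff₀ hs]; linarith), zero_mul]
    have hdiff : Differentiable ℝ fun x => η (Φ x / s) * f x := fun x => by
      rcases lt_or_ge (Φ x) 0 with hx | hx
      · exact (hderiv x hx).differentiableAt
      · exact (hzero x hx).differentiableAt_iff.2 (differentiableAt_const _)
    have hfd0 : ∀ x, 0 ≤ Φ x → fderiv ℝ (fun x => η (Φ x / s) * f x) x = 0 := fun x hx => by
      rw [(hzero x hx).fderiv_eq]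
      simp
    have hsupp : HasCompactSupport fun x => η (Φ x / s) * f x :=
      HasCompactSupport.of_support_subset_isCompact hcpt fun x hx => by
        by_contra h
        exact hx ((hzero x (le_of_lt (not_le.1 h))).eq_of_nhds)
    obtain ⟨M', hM'⟩ : ∃ M' : ℝ, ∀ x, ‖fderiv ℝ (fun x => η (Φ x / s) * f x) x‖ ≤ M' := by
      have hcon : ContinuousOn (fun x => f x • (-(ψ (Φ x / s) : ℝ)) • s⁻¹ • fderiv ℝ Φ x)
          {x | Φ x ≤ 0} := by
        have h2 := hΦ.continuous_fderiv (by norm_num)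
        exact hf.smul (by fun_prop)
      obtain ⟨M', hM'⟩ := hcpt.exists_bound_of_continuousOn hcon
      refine ⟨max (M + M') 0, fun x => ?_⟩
      rcases lt_or_ge (Φ x) 0 with hx | hx
      · rw [(hderiv x hx).fderiv]
        refine le_max_of_le_left ((norm_add_le _ _).trans (add_le_add ?_ (hM' x hx.le)))
        rw [norm_smul, Real.norm_of_nonneg (hη01 _).1]
        exact (mul_le_of_le_one_left (norm_nonneg _) (hη01 _).2).trans (hM x hx)
      · rw [hfd0 x hx, norm_zero]
        exact le_max_right _ _
    have h0 := integral_fderiv_apply_eq_zero (μ := volume) hdiff hsupp hM' v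
    have hψzero : ∀ x, 0 ≤ Φ x → ψ (Φ x / s) = 0 := fun x hx => by
      by_contra h
      have := (hψs _ h).2
      rw [div_le_iff₀ hs] at this
      linarith
    have h1 : ∫ x in {x | Φ x < 0}, fderiv ℝ (fun x => η (Φ x / s) * f x) x v = 0 := by
      refine (setIntegral_eq_integral_of_forall_compl_eq_zero fun x hx => ?_).trans h0
      rw [hfd0 x (not_lt.1 hx)]
      simp
    have h2 : ∫ x in {x | Φ x < 0}, s⁻¹ * ψ (Φ x / s) * G x = ∫ x, s⁻¹ * ψ (Φ x / s) * G x := by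
      refine setIntegral_eq_integral_of_forall_compl_eq_zero fun x hx => ?_
      rw [hψzero x (not_lt.1 hx)]
      simp
    have h3 : EqOn (fun x => fderiv ℝ (fun x => η (Φ x / s) * f x) x v)
        (fun x => η (Φ x / s) * fderiv ℝ f x v - s⁻¹ * ψ (Φ x / s) * G x) {x | Φ x < 0} := by
      intro x hx
      simp only [(hderiv x hx).fderiv, hGf x (le_of_lt hx)]
      simp
      ring
    have hi1 : IntegrableOn (fun x => η (Φ x / s) * fderiv ℝ f x v) {x | Φ x < 0} := by
      refine Integrable.bdd_mul (c := 1) hdi ?_ (Eventually.of_forall fun x => ?_)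
      · exact (hηc.comp (hΦc.div_const s)).aestronglyMeasurable
      · rw [Real.norm_of_nonneg (hη01 _).1]
        exact (hη01 _).2
    have hi2 : IntegrableOn (fun x => s⁻¹ * ψ (Φ x / s) * G x) {x | Φ x < 0} := by
      have hcont : Continuous fun x => s⁻¹ * (ψ (Φ x / s) : ℝ) * G x := by
        have := G.continuous
        fun_prop
      exact (hcont.continuousOn.integrableOn_compact hcpt).mono_set fun x (hx : Φ x < 0) => hx.le
    rw [setIntegral_congr_fun hΩo.measurableSet h3, integral_sub hi1 hi2, h2] at h1
    linarith
  -- the truncated volume integrals converge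
  have hlim2 : Tendsto (fun s : ℝ => ∫ x in {x | Φ x < 0}, η (Φ x / s) * fderiv ℝ f x v) (𝓝[>] 0)
      (𝓝 (∫ x in {x | Φ x < 0}, fderiv ℝ f x v)) := by
    refine tendsto_integral_filter_of_dominated_convergence (fun x => ‖fderiv ℝ f x v‖)
      (Eventually.of_forall fun s => ?_) (Eventually.of_forall fun s =>
        Eventually.of_forall fun x => ?_) hdi.norm
      ((ae_restrict_iff' hΩo.measurableSet).2 (Eventually.of_forall fun x hx => ?_))
    · exact ((hηc.comp (hΦc.div_const s)).measurable.mul hdm).aestronglyMeasurable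
    · rw [norm_mul, Real.norm_of_nonneg (hη01 _).1]
      exact mul_le_of_le_one_left (norm_nonneg _) (hη01 _).2
    · refine tendsto_const_nhds.congr' ?_
      have hx' : Φ x < 0 := hx
      filter_upwards [Ioo_mem_nhdsGT (show 0 < -Φ x / 2 by linarith)] with s hs
      rw [hη1 _ (by rw [div_le_iff₀ hs.1]; linarith [hs.2]), one_mul]
  refine tendsto_nhds_unique (hlim2.congr' ?_) hlim
  filter_upwards [self_mem_nhdsWithin] with s hs using hkey s hs

/-- The derivative at `v` of the map `v ↦ ‖v‖ ^ q • v`. -/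
noncomputable def normRpowSMulDeriv {E : Type*} [NormedAddCommGroup E] [InnerProductSpace ℝ E]
    (q : ℝ) (v : E) : E →L[ℝ] E :=
  ‖v‖ ^ q • ContinuousLinearMap.id ℝ E + (q * ‖v‖ ^ (q - 2)) • (innerSL ℝ v).smulRight v

lemma rpow_sub_two_mul_sq_le {q a : ℝ} (ha : 0 ≤ a) : a ^ (q - 2) * a ^ 2 ≤ a ^ q := by
  rcases ha.eq_or_lt with rfl | ha
  · simpa using Real.rpow_nonneg le_rfl q
  · rw [← Real.rpow_natCast, ← Real.rpow_add ha]
    simp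

lemma norm_normRpowSMulDeriv_le {E : Type*} [NormedAddCommGroup E] [InnerProductSpace ℝ E]
    {q : ℝ} (hq : 0 ≤ q) (v : E) : ‖normRpowSMulDeriv q v‖ ≤ (1 + q) * ‖v‖ ^ q := by
  refine ContinuousLinearMap.opNorm_le_bound _ (by positivity) fun w => ?_
  have h1 : ‖normRpowSMulDeriv q v w‖ ≤ ‖v‖ ^ q * ‖w‖ + q * ‖v‖ ^ (q - 2) * (‖⟪v, w⟫‖ * ‖v‖) := by
    refine (norm_add_le _ _).trans (le_of_eq ?_)
    simp [norm_smul, abs_of_nonneg hq, Real.abs_rpow_of_nonneg (norm_nonneg v)]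
  have h2 := norm_inner_le_norm (𝕜 := ℝ) v w
  have h3 := rpow_sub_two_mul_sq_le (q := q) (norm_nonneg v)
  calc _ ≤ ‖v‖ ^ q * ‖w‖ + q * ‖v‖ ^ (q - 2) * (‖v‖ * ‖w‖ * ‖v‖) := h1.trans (by gcongr)
    _ = ‖v‖ ^ q * ‖w‖ + q * (‖v‖ ^ (q - 2) * ‖v‖ ^ 2) * ‖w‖ := by ring
    _ ≤ ‖v‖ ^ q * ‖w‖ + q * ‖v‖ ^ q * ‖w‖ := by gcongr
    _ = _ := by ring

lemma hasFDerivAt_norm_rpow_smul {E : Type*} [NormedAddCommGroup E] [InnerProductSpace ℝ E]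
    {q : ℝ} (hq : 0 ≤ q) (v : E) :
    HasFDerivAt (fun v : E => ‖v‖ ^ q • v) (normRpowSMulDeriv q v) v := by
  rcases eq_or_ne v 0 with rfl | hv
  · rcases hq.eq_or_lt with rfl | hq
    · have : (fun v : E => ‖v‖ ^ (0 : ℝ) • v) = id := by
        ext w
        simp
      rw [this]
      simpa [normRpowSMulDeriv] using hasFDerivAt_id (𝕜 := ℝ) (0 : E)
    · have hz : normRpowSMulDeriv q (0 : E) = 0 := by
        ext w
        simp [normRpowSMulDeriv, Real.zero_rpow hq.ne']
      rw [hz, hasFDerivAt_iff_isLittleO_nhds_zero]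
      have hcont : ContinuousAt (fun v : E => ‖v‖ ^ q) 0 :=
        (continuous_norm.rpow_const fun _ => Or.inr hq.le).continuousAt
      have hlim : Tendsto (fun v : E => ‖v‖ ^ q) (𝓝 0) (𝓝 0) := by
        simpa [ContinuousAt, Real.zero_rpow hq.ne'] using hcont
      have := ((Asymptotics.isLittleO_one_iff ℝ).2 hlim).smul_isBigO
        (Asymptotics.isBigO_refl (fun v : E => v) (𝓝 0))
      simpa using this
  · have h0 : ‖v‖ ≠ 0 := norm_ne_zero_iff.2 hv
    have h1 : HasFDerivAt (fun v : E => ‖v‖ ^ 2) (2 • innerSL ℝ v) v :=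
      (hasStrictFDerivAt_norm_sq v).hasFDerivAt
    have h2 := h1.rpow_const (p := q / 2) (Or.inl (by positivity))
    have h3 : ∀ w : E, ∀ r : ℝ, (‖w‖ ^ 2) ^ r = ‖w‖ ^ (2 * r) := fun w r => by
      rw [← Real.rpow_natCast, ← Real.rpow_mul (norm_nonneg w)]
      norm_num
    simp only [h3] at h2
    have h4 := h2.smul (hasFDerivAt_id v)
    convert h4 using 1
    · ext w
      simp [mul_div_cancel₀]
    · ext w
      have e1 : 2 * (q / 2) = q := by ring
      have e2 : 2 * (q / 2 - 1) = q - 2 := by ring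
      have e3 : q / 2 * ‖v‖ ^ (q - 2) * (2 * ⟪v, w⟫) = q * ‖v‖ ^ (q - 2) * ⟪v, w⟫ := by ring
      simp [normRpowSMulDeriv, smul_smul, e1, e2, e3]

section Frobenius

variable {n : ℕ}

lemma continuous_frobNorm : Continuous (frobNorm (n := n)) := by
  unfold frobNorm
  refine Real.continuous_sqrt.comp (continuous_finsetSum _ fun i _ =>
    continuous_finsetSum _ fun j _ => ?_)
  have h : Continuous fun T : EuclideanSpace ℝ (Fin n) →L[ℝ] EuclideanSpace ℝ (Fin n) =>
    T (EuclideanSpace.single j 1) := by fun_prop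
  exact ((EuclideanSpace.proj (𝕜 := ℝ) i).continuous.comp h).pow 2

lemma frobNorm_nonneg (T : EuclideanSpace ℝ (Fin n) →L[ℝ] EuclideanSpace ℝ (Fin n)) :
    0 ≤ frobNorm T := Real.sqrt_nonneg _

lemma frobNorm_sq (T : EuclideanSpace ℝ (Fin n) →L[ℝ] EuclideanSpace ℝ (Fin n)) :
    frobNorm T ^ 2 = ∑ i, ∑ j, (T (EuclideanSpace.single j 1) i) ^ 2 :=
  Real.sq_sqrt (by positivity)

lemma abs_sum_apply_single_le (T : EuclideanSpace ℝ (Fin n) →L[ℝ] EuclideanSpace ℝ (Fin n)) :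
    |∑ i, T (EuclideanSpace.single i 1) i| ≤ √n * frobNorm T := by
  refine abs_le_of_sq_le_sq ?_ (mul_nonneg (Real.sqrt_nonneg _) (frobNorm_nonneg T))
  rw [mul_pow, Real.sq_sqrt (Nat.cast_nonneg n), frobNorm_sq]
  calc _ ≤ (n : ℝ) * ∑ i, (T (EuclideanSpace.single i 1) i) ^ 2 := by
        simpa using sq_sum_le_card_mul_sum_sq (s := Finset.univ)
          (f := fun i => T (EuclideanSpace.single i 1) i)
    _ ≤ _ := by
        gcongr with i
        exact Finset.single_le_sum (f := fun j => (T (EuclideanSpace.single j 1) i) ^ 2)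
          (fun j _ => sq_nonneg _) (Finset.mem_univ i)

lemma abs_sum_mul_inner_apply_single_le
    (T : EuclideanSpace ℝ (Fin n) →L[ℝ] EuclideanSpace ℝ (Fin n)) (v : EuclideanSpace ℝ (Fin n)) :
    |∑ i, ⟪v, T (EuclideanSpace.single i 1)⟫ * v i| ≤ ‖v‖ ^ 2 * frobNorm T := by
  refine abs_le_of_sq_le_sq ?_ (mul_nonneg (sq_nonneg _) (frobNorm_nonneg T))
  have h1 : ∑ i, ⟪v, T (EuclideanSpace.single i 1)⟫ * v i =
      ∑ k : Fin n × Fin n, (v k.1 * v k.2) * T (EuclideanSpace.single k.2 1) k.1 := by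
    rw [Fintype.sum_prod_type_right]
    refine Finset.sum_congr rfl fun i _ => ?_
    rw [PiLp.inner_apply, Finset.sum_mul]
    refine Finset.sum_congr rfl fun j _ => ?_
    simp
    ring
  have h2 : ‖v‖ ^ 2 = ∑ i, v i ^ 2 := by simp [EuclideanSpace.norm_sq_eq]
  rw [h1, mul_pow, frobNorm_sq]
  refine (Finset.sum_mul_sq_le_sq_mul_sq _ _ _).trans (le_of_eq ?_)
  congr 1
  · rw [Fintype.sum_prod_type, sq, h2, Finset.sum_mul_sum]
    simp only [mul_pow]
  · rw [Fintype.sum_prod_type]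

lemma abs_sum_normRpowSMulDeriv_le {q : ℝ} (hq : 0 ≤ q) (v : EuclideanSpace ℝ (Fin n))
    (T : EuclideanSpace ℝ (Fin n) →L[ℝ] EuclideanSpace ℝ (Fin n)) :
    |∑ i, normRpowSMulDeriv q v (T (EuclideanSpace.single i 1)) i| ≤
      (q + √n) * (‖v‖ ^ q * frobNorm T) := by
  have h1 : ∑ i, normRpowSMulDeriv q v (T (EuclideanSpace.single i 1)) i =
      ‖v‖ ^ q * ∑ i, T (EuclideanSpace.single i 1) i +
        q * ‖v‖ ^ (q - 2) * ∑ i, ⟪v, T (EuclideanSpace.single i 1)⟫ * v i := by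
    simp [normRpowSMulDeriv, Finset.mul_sum, Finset.sum_add_distrib]
  have hf := frobNorm_nonneg T
  rw [h1]
  refine (abs_add_le _ _).trans ?_
  rw [abs_mul, abs_mul (q * _), abs_of_nonneg (show 0 ≤ ‖v‖ ^ q by positivity),
    abs_of_nonneg (show 0 ≤ q * ‖v‖ ^ (q - 2) by positivity)]
  calc _ ≤ ‖v‖ ^ q * (√n * frobNorm T) + q * ‖v‖ ^ (q - 2) * (‖v‖ ^ 2 * frobNorm T) := by
        gcongr
        · exact abs_sum_apply_single_le T
        · exact abs_sum_mul_inner_apply_single_le T v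
    _ = ‖v‖ ^ q * (√n * frobNorm T) + q * (‖v‖ ^ (q - 2) * ‖v‖ ^ 2) * frobNorm T := by ring
    _ ≤ ‖v‖ ^ q * (√n * frobNorm T) + q * ‖v‖ ^ q * frobNorm T := by
        gcongr
        exact rpow_sub_two_mul_sq_le (norm_nonneg v)
    _ = _ := by ring

end Frobenius

lemma rpow_sub_two_mul_le {p a b : ℝ} (hp : 2 ≤ p) (ha : 0 ≤ a) (hb : 0 ≤ b) :
    a ^ (p - 2) * b ≤ (p - 2) / p * a ^ p + 2 / p * b ^ (p / 2) := by
  have hp0 : 0 < p := by linarith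
  have h := Real.geom_mean_le_arith_mean2_weighted (w₁ := (p - 2) / p) (w₂ := 2 / p)
    (p₁ := a ^ p) (p₂ := b ^ (p / 2)) (div_nonneg (by linarith) hp0.le) (by positivity)
    (by positivity) (by positivity) (by field_simp; ring)
  rw [← Real.rpow_mul ha, ← Real.rpow_mul hb] at h
  have e1 : p * ((p - 2) / p) = p - 2 := by field_simp
  have e2 : p / 2 * (2 / p) = 1 := by field_simp
  rwa [e1, e2, Real.rpow_one] at h

lemma fderiv_apply_single_one {n : ℕ} (f : EuclideanSpace ℝ (Fin n) → ℝ)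
    (x : EuclideanSpace ℝ (Fin n)) (i : Fin n) :
    fderiv ℝ f x (EuclideanSpace.single i 1) = gradient f x i := by
  have h : ⟪gradient f x, EuclideanSpace.single i 1⟫ = fderiv ℝ f x (EuclideanSpace.single i 1) :=
    InnerProductSpace.toDual_symm_apply
  rw [← h, EuclideanSpace.inner_single_right]
  simp

lemma exists_integral_divergence_eq_surface_integral {m : ℕ}
    {Φ : EuclideanSpace ℝ (Fin (m + 1)) → ℝ}
    (hΦ : ContDiff ℝ 1 Φ) (hcpt : IsCompact {x | Φ x ≤ 0})
    (hgrad : ∀ x, Φ x = 0 → gradient Φ x ≠ 0) :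
    ∃ C : ℝ, 0 < C ∧ ∀ (F : EuclideanSpace ℝ (Fin (m + 1)) → EuclideanSpace ℝ (Fin (m + 1)))
      (L : EuclideanSpace ℝ (Fin (m + 1)) →
        EuclideanSpace ℝ (Fin (m + 1)) →L[ℝ] EuclideanSpace ℝ (Fin (m + 1))) (M : ℝ),
      ContinuousOn F {x | Φ x ≤ 0} → (∀ x, Φ x < 0 → HasFDerivAt F (L x) x) →
      (∀ x, Φ x < 0 → ‖L x‖ ≤ M) →
      IntegrableOn (fun x => ∑ i, L x (EuclideanSpace.single i 1) i) {x | Φ x < 0} ∧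
      ∫ x in {x | Φ x < 0}, ∑ i, L x (EuclideanSpace.single i 1) i =
        C * ∫ x in {x | Φ x = 0}, ⟪F x, ‖gradient Φ x‖⁻¹ • gradient Φ x⟫ ∂μH[(m : ℝ)] := by
  obtain ⟨C, hC, h⟩ := exists_integral_fderiv_eq_surface_integral hΦ hcpt hgrad
  refine ⟨C, hC, fun F L M hF hL hM => ?_⟩
  have hd : ∀ i x, Φ x < 0 →
      HasFDerivAt (fun x => F x i) ((EuclideanSpace.proj (𝕜 := ℝ) i).comp (L x)) x :=
    fun i x hx => (EuclideanSpace.proj (𝕜 := ℝ) i).hasFDerivAt.comp x (hL x hx)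
  have hcomp := fun i => h (fun x => F x i)
    ((EuclideanSpace.proj (𝕜 := ℝ) i).continuous.comp_continuousOn hF)
    (fun x hx => (hd i x hx).differentiableAt)
    ⟨‖(EuclideanSpace.proj i : EuclideanSpace ℝ (Fin (m + 1)) →L[ℝ] ℝ)‖ * M, fun x hx => by
      rw [(hd i x hx).fderiv]
      refine (ContinuousLinearMap.opNorm_comp_le _ _).trans ?_
      gcongr
      exact hM x hx⟩ (EuclideanSpace.single i 1)
  have hΩm : MeasurableSet {x | Φ x < 0} :=
    (isOpen_lt hΦ.continuous continuous_const).measurableSet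
  have heq : ∀ i, EqOn (fun x => fderiv ℝ (fun x => F x i) x (EuclideanSpace.single i 1))
      (fun x => L x (EuclideanSpace.single i 1) i) {x | Φ x < 0} := fun i x hx => by
    simp only [(hd i x hx).fderiv]
    rfl
  have hint : ∀ i, IntegrableOn (fun x => L x (EuclideanSpace.single i 1) i) {x | Φ x < 0} :=
    fun i => (hcomp i).2.1.congr_fun (heq i) hΩm
  refine ⟨integrable_finsetSum _ fun i _ => hint i, ?_⟩
  rw [integral_finsetSum _ fun i _ => hint i]
  have hsurf : ∀ x, ⟪F x, ‖gradient Φ x‖⁻¹ • gradient Φ x⟫ =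
      ∑ i, ‖gradient Φ x‖⁻¹ * (F x i * fderiv ℝ Φ x (EuclideanSpace.single i 1)) := fun x => by
    rw [inner_smul_right, PiLp.inner_apply, Finset.mul_sum]
    refine Finset.sum_congr rfl fun i _ => ?_
    rw [fderiv_apply_single_one]
    simp only [RCLike.inner_apply, conj_trivial]
    ring
  simp only [hsurf]
  rw [integral_finsetSum _ fun i _ => (hcomp i).1, Finset.mul_sum]
  refine Finset.sum_congr rfl fun i _ => ?_
  rw [← (hcomp i).2.2, setIntegral_congr_fun hΩm (heq i)]

lemma hasDerivAt_intervalIntegral_of_continuousOn {h : ℝ → ℝ} {U : Set ℝ} (hU : IsOpen U)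
    (hcont : ContinuousOn h U) {a : ℝ} (ha : 0 < a) (haU : a ∈ U)
    (hint : IntegrableOn h (Ioo 0 a)) :
    HasDerivAt (fun t => ∫ s in (0 : ℝ)..t, h s) (h a) a :=
  intervalIntegral.integral_hasDerivAt_right
    ((intervalIntegrable_iff_integrableOn_Ioo_of_le ha.le).2 hint)
    (hcont.stronglyMeasurableAtFilter hU a haU) (hcont.continuousAt (hU.mem_nhds haU))

/-- Theorem (main2, smooth case, `C = 0`): let `n ≥ 2`, `Ω ⊂ ℝⁿ` bounded open with smooth
boundary (given by a smooth defining function `Φ` with nonvanishing gradient on `∂Ω`,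
with outer unit normal `∇Φ/|∇Φ|` and surface measure the `(n−1)`-Hausdorff measure),
`p ≥ 2`, `h : (0,B) → (0,∞)` continuous and integrable near `0`, `H(λ) = ∫₀^λ h`,
`T_h = H/h`. If `u ∈ C²(Ω̄)`, `0 < u < B` on `Ω̄`, and
`∫_{∂Ω} |∇u|^{p−2} (∇u·n) H(u) dσ ≤ 0`, then
`∫_Ω |∇u|^p h(u) ≤ (p−1+√(n−1))^{p/2} ∫_Ω (|∇²u| |T_h(u)|)^{p/2} h(u)`. -/
theorem weighted_interpolation_inequality (n : ℕ) (hn : 2 ≤ n)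
    (Ω : Set (EuclideanSpace ℝ (Fin n))) (hΩopen : IsOpen Ω)
    (hΩbdd : Bornology.IsBounded Ω)
    (Φ : EuclideanSpace ℝ (Fin n) → ℝ) (hΦ : ContDiff ℝ (⊤ : ℕ∞) Φ)
    (hΩdef : Ω = {x | Φ x < 0}) (hfront : frontier Ω = {x | Φ x = 0})
    (hΦgrad : ∀ x ∈ frontier Ω, gradient Φ x ≠ 0)
    (p : ℝ) (hp : 2 ≤ p)
    (B : ℝ≥0∞) (hB : 0 < B) (h : ℝ → ℝ)
    (hcont : ContinuousOn h {x : ℝ | 0 < x ∧ ENNReal.ofReal x < B})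
    (hpos : ∀ x : ℝ, 0 < x → ENNReal.ofReal x < B → 0 < h x)
    (hint : ∀ lam : ℝ, 0 < lam → ENNReal.ofReal lam < B → IntegrableOn h (Ioo 0 lam))
    (u : EuclideanSpace ℝ (Fin n) → ℝ) (hu : ContDiff ℝ 2 u)
    (hrange : ∀ x ∈ closure Ω, 0 < u x ∧ ENNReal.ofReal (u x) < B)
    (hbdry :
      ∫ x in frontier Ω,
          ‖gradient u x‖ ^ (p - 2) *
            ⟪gradient u x, ‖gradient Φ x‖⁻¹ • gradient Φ x⟫ *
              (∫ s in (0:ℝ)..(u x), h s) ∂(μH[(n : ℝ) - 1]) ≤ 0) :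
    ∫ x in Ω, ‖gradient u x‖ ^ p * h (u x) ≤
      (p - 1 + Real.sqrt ((n : ℝ) - 1)) ^ (p / 2) *
        ∫ x in Ω,
          (frobNorm (fderiv ℝ (gradient u) x) *
              |(∫ s in (0:ℝ)..(u x), h s) / h (u x)|) ^ (p / 2) * h (u x) := by
  obtain ⟨m, rfl⟩ : ∃ m, n = m + 1 := ⟨n - 1, by omega⟩
  have hdim : ((m + 1 : ℕ) : ℝ) - 1 = m := by simp
  rw [hdim] at hbdry ⊢
  set H : ℝ → ℝ := fun t => ∫ s in (0 : ℝ)..t, h s with hH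
  set v := gradient u with hv
  have hΦ1 : ContDiff ℝ 1 Φ := hΦ.of_le (by exact_mod_cast le_top)
  have hclosure : closure Ω = {x | Φ x ≤ 0} := by
    rw [closure_eq_self_union_frontier, hfront, hΩdef]
    ext x
    exact (le_iff_lt_or_eq (a := Φ x)).symm
  have hcpt : IsCompact {x | Φ x ≤ 0} := hclosure ▸ hΩbdd.isCompact_closure
  rw [hfront] at hΦgrad hbdry
  rw [hclosure] at hrange
  rw [hΩdef]
  set U : Set ℝ := {x : ℝ | 0 < x ∧ ENNReal.ofReal x < B} with hUdef
  have hU : IsOpen U :=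
    (isOpen_lt continuous_const continuous_id).inter
      (isOpen_lt ENNReal.continuous_ofReal continuous_const)
  have hHd : ∀ a ∈ U, HasDerivAt H (h a) a := fun a ha =>
    hasDerivAt_intervalIntegral_of_continuousOn hU hcont ha.1 ha (hint a ha.1 ha.2)
  have hHc : ContinuousOn H U := fun a ha => (hHd a ha).continuousAt.continuousWithinAt
  have huc := hu.continuous
  have hmaps : MapsTo u {x | Φ x ≤ 0} U := fun x hx => hrange x hx
  have hHu : ContinuousOn (fun x => H (u x)) {x | Φ x ≤ 0} := hHc.comp huc.continuousOn hmaps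
  have hhu : ContinuousOn (fun x => h (u x)) {x | Φ x ≤ 0} := hcont.comp huc.continuousOn hmaps
  have hv1 : ContDiff ℝ 1 v :=
    (InnerProductSpace.toDual ℝ (EuclideanSpace ℝ (Fin (m + 1)))).symm.contDiff.comp
      (hu.fderiv_right (m := 1) (by norm_num))
  have hvc := hv1.continuous
  have hDc : Continuous fun x => fderiv ℝ v x := hv1.continuous_fderiv (by norm_num)
  have hq : 0 ≤ p - 2 := by linarith
  have hp0 : 0 < p := by linarith
  have hvq : Continuous fun x => ‖v x‖ ^ (p - 2) := hvc.norm.rpow_const fun _ => Or.inr hq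
  obtain ⟨C, hC, hdiv⟩ := exists_integral_divergence_eq_surface_integral hΦ1 hcpt hΦgrad
  -- the vector field `H(u) |∇u|^{p-2} ∇u` and its derivative
  set F := fun x => H (u x) • ‖v x‖ ^ (p - 2) • v x with hF
  set L := fun x => H (u x) • (normRpowSMulDeriv (p - 2) (v x)).comp (fderiv ℝ v x) +
    (h (u x) • fderiv ℝ u x).smulRight (‖v x‖ ^ (p - 2) • v x) with hL
  have hFL : ∀ x, Φ x < 0 → HasFDerivAt F (L x) x := fun x hx =>
    ((hHd _ (hmaps (le_of_lt hx))).comp_hasFDerivAt x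
      (hu.differentiable (by norm_num) x).hasFDerivAt).smul
      ((hasFDerivAt_norm_rpow_smul hq (v x)).comp x
        (hv1.differentiable (by norm_num) x).hasFDerivAt)
  have hFc : ContinuousOn F {x | Φ x ≤ 0} := hHu.smul (hvq.smul hvc).continuousOn
  obtain ⟨M, hM⟩ : ∃ M : ℝ, ∀ x, Φ x < 0 → ‖L x‖ ≤ M := by
    have hbc : ContinuousOn (fun x => |H (u x)| * ((1 + (p - 2)) * ‖v x‖ ^ (p - 2) *
        ‖fderiv ℝ v x‖) + |h (u x)| * ‖fderiv ℝ u x‖ * (‖v x‖ ^ (p - 2) * ‖v x‖))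
        {x | Φ x ≤ 0} :=
      (hHu.abs.mul ((continuous_const.mul hvq).mul hDc.norm).continuousOn).add
        ((hhu.abs.mul (hu.continuous_fderiv (by norm_num)).norm.continuousOn).mul
          (hvq.mul hvc.norm).continuousOn)
    obtain ⟨M, hM⟩ := hcpt.bddAbove_image hbc
    refine ⟨M, fun x hx => le_trans ?_ (hM (mem_image_of_mem _ (le_of_lt hx)))⟩
    refine (norm_add_le _ _).trans (add_le_add ?_ ?_)
    · rw [norm_smul, Real.norm_eq_abs]
      gcongr
      refine (ContinuousLinearMap.opNorm_comp_le _ _).trans ?_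
      gcongr
      exact norm_normRpowSMulDeriv_le hq _
    · rw [ContinuousLinearMap.norm_smulRight_apply, norm_smul, norm_smul, Real.norm_eq_abs,
        Real.norm_of_nonneg (by positivity : 0 ≤ ‖v x‖ ^ (p - 2))]
  obtain ⟨hdivi, hdiveq⟩ := hdiv F L M hFc hFL hM
  have hflux : ∫ x in {x | Φ x = 0}, ⟪F x, ‖gradient Φ x‖⁻¹ • gradient Φ x⟫ ∂μH[(m : ℝ)] =
      ∫ x in {x | Φ x = 0}, ‖v x‖ ^ (p - 2) * ⟪v x, ‖gradient Φ x‖⁻¹ • gradient Φ x⟫ * H (u x)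
        ∂μH[(m : ℝ)] := by
    refine integral_congr_ae (Eventually.of_forall fun x => ?_)
    simp only [hF, inner_smul_left, conj_trivial]
    ring
  have hdivle : ∫ x in {x | Φ x < 0}, ∑ i, L x (EuclideanSpace.single i 1) i ≤ 0 := by
    rw [hdiveq, hflux]
    exact mul_nonpos_of_nonneg_of_nonpos hC.le hbdry
  -- the pointwise bound
  set K := p - 1 + √(m : ℝ) with hK
  have hK0 : 0 ≤ K := by
    have := Real.sqrt_nonneg (m : ℝ)
    linarith
  have hKn : p - 2 + √((m + 1 : ℕ) : ℝ) ≤ K := by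
    have h1 : √((m + 1 : ℕ) : ℝ) ≤ 1 + √(m : ℝ) := by
      refine Real.sqrt_le_iff.2 ⟨by positivity, ?_⟩
      have := Real.sq_sqrt (Nat.cast_nonneg (α := ℝ) m)
      push_cast
      nlinarith [Real.sqrt_nonneg (m : ℝ)]
    linarith
  set I := fun x => ‖v x‖ ^ p * h (u x) with hI
  set J := fun x => (frobNorm (fderiv ℝ v x) * |H (u x) / h (u x)|) ^ (p / 2) * h (u x) with hJ
  have hpt : ∀ x, Φ x ≤ 0 →
      2 / p * (I x - K ^ (p / 2) * J x) ≤ ∑ i, L x (EuclideanSpace.single i 1) i := by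
    intro x hx
    have hh : 0 < h (u x) := hpos _ (hrange x hx).1 (hrange x hx).2
    have hsum : ∑ i, L x (EuclideanSpace.single i 1) i = H (u x) *
        ∑ i, normRpowSMulDeriv (p - 2) (v x) (fderiv ℝ v x (EuclideanSpace.single i 1)) i +
          I x := by
      have hg : ∀ i, fderiv ℝ u x (EuclideanSpace.single i 1) = v x i :=
        fderiv_apply_single_one u x
      have hpow : ‖v x‖ ^ p = ‖v x‖ ^ (p - 2) * ∑ i, v x i ^ 2 := by
        have : ∑ i, v x i ^ 2 = ‖v x‖ ^ 2 := by simp [EuclideanSpace.norm_sq_eq]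
        rw [this, ← Real.rpow_natCast, ← Real.rpow_add_of_nonneg (norm_nonneg _) hq (by norm_num)]
        norm_num
      simp only [hI, hpow, Finset.mul_sum, Finset.sum_mul, ← Finset.sum_add_distrib]
      refine Finset.sum_congr rfl fun i _ => ?_
      simp [hL, hg]
      ring
    have htr := abs_sum_normRpowSMulDeriv_le hq (v x) (fderiv ℝ v x)
    set S := ∑ i, normRpowSMulDeriv (p - 2) (v x) (fderiv ℝ v x (EuclideanSpace.single i 1)) i
    set b := frobNorm (fderiv ℝ v x) * |H (u x) / h (u x)| with hb
    have hf0 := frobNorm_nonneg (fderiv ℝ v x)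
    have hb0 : 0 ≤ b := by positivity
    have hHS : |H (u x) * S| ≤ ‖v x‖ ^ (p - 2) * (K * b) * h (u x) := by
      have hHh : |H (u x)| = |H (u x) / h (u x)| * h (u x) := by
        rw [abs_div, abs_of_pos hh, div_mul_cancel₀ _ hh.ne']
      calc |H (u x) * S| = |S| * (|H (u x) / h (u x)| * h (u x)) := by
            rw [abs_mul, ← hHh, mul_comm]
        _ ≤ K * (‖v x‖ ^ (p - 2) * frobNorm (fderiv ℝ v x)) *
            (|H (u x) / h (u x)| * h (u x)) := by
            gcongr
            exact htr.trans (by gcongr)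
        _ = _ := by rw [hb]; ring
    have hyoung := rpow_sub_two_mul_le hp (norm_nonneg (v x)) (mul_nonneg hK0 hb0)
    rw [Real.mul_rpow hK0 hb0] at hyoung
    have h1 := mul_le_mul_of_nonneg_right hyoung hh.le
    have h2 := (abs_le.1 (hHS.trans h1)).1
    have h3 : (p - 2) / p = 1 - 2 / p := by field_simp
    rw [h3] at h2
    rw [hsum]
    simp only [hI, hJ]
    linarith
  have hIi : IntegrableOn I {x | Φ x < 0} := by
    have : ContinuousOn I {x | Φ x ≤ 0} :=
      (hvc.norm.rpow_const fun _ => Or.inr hp0.le).continuousOn.mul hhu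
    exact (this.integrableOn_compact hcpt).mono_set fun x (hx : Φ x < 0) => hx.le
  have hJi : IntegrableOn J {x | Φ x < 0} := by
    have : ContinuousOn J {x | Φ x ≤ 0} :=
      (((continuous_frobNorm.comp hDc).continuousOn.mul (hHu.div hhu fun x hx =>
        (hpos _ (hrange x hx).1 (hrange x hx).2).ne').abs).rpow_const fun _ _ =>
          Or.inr (by positivity)).mul hhu
    exact (this.integrableOn_compact hcpt).mono_set fun x (hx : Φ x < 0) => hx.le
  have hfinal : 2 / p * ((∫ x in {x | Φ x < 0}, I x) -
      K ^ (p / 2) * ∫ x in {x | Φ x < 0}, J x) ≤ 0 := by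
    rw [← integral_const_mul, ← integral_sub hIi (hJi.const_mul _), ← integral_const_mul]
    exact (setIntegral_mono_on ((hIi.sub (hJi.const_mul _)).const_mul _) hdivi
      (isOpen_lt hΦ1.continuous continuous_const).measurableSet
      fun x hx => hpt x (le_of_lt hx)).trans hdivle
  have := nonpos_of_mul_nonpos_right hfinal (by positivity)
  linarith
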